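/- There exist T > 0 and γ > 0 and a sequence of functions e_0, e_1, e_2, …, each analytic in the complex vector t in a neighborhood of t = 0, such that the following holds: for every h ∈ ℕ there is a constant C, independent of t for t ∈ 𝕋(T,γ), with | log( Z_N(t) / Z_N(0) ) − ( N² e_0(t) + e_1(t) + N^{−2} e_2(t) + … + N^{−2h} e_{h+1}(t) ) | ≤ C N^{−2h−2} for all N ≥ 1; i.e. log(Z_N(t)/Z_N(0)) admits the complete uniform asymptotic expansion N² e_0(t) + e_1(t) + N^{−2} e_2(t) + ⋯ in even powers of 1/N. -/

import Mathlib

open MeasureTheory Filter Finset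

noncomputable section

namespace LoopEq

/-- The external field `V_t(x) = x^2/2 + ∑_{j=1}^v t_j x^j`. -/
def Vt (v : ℕ) (t : ℕ → ℝ) (x : ℝ) : ℝ :=
  x ^ 2 / 2 + ∑ j ∈ Finset.Icc 1 v, t j * x ^ j

/-- The derivative `V_t'(x) = x + ∑_{j=1}^v j t_j x^(j-1)`. -/
def Vt' (v : ℕ) (t : ℕ → ℝ) (x : ℝ) : ℝ :=
  x + ∑ j ∈ Finset.Icc 1 v, (j : ℝ) * t j * x ^ (j - 1)

/-- The complex extension of `V_t'`. -/
def Vt'C (v : ℕ) (t : ℕ → ℝ) (z : ℂ) : ℂ :=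
  z + ∑ j ∈ Finset.Icc 1 v, (j : ℂ) * (t j : ℂ) * z ^ (j - 1)

/-- The parameter domain `𝕋(T,γ)`. -/
def Tdom (v : ℕ) (T γ : ℝ) : Set (ℕ → ℝ) :=
  {t | Real.sqrt (∑ j ∈ Finset.Icc 1 v, t j ^ 2) ≤ T ∧
    γ * ∑ j ∈ Finset.Icc 1 (v - 1), |t j| < t v}

/-- The (unnormalized) joint eigenvalue density
`∏_{j<ℓ} (λ_j - λ_ℓ)^2 exp(-N ∑_j V_t(λ_j))`. -/
def dens (v N : ℕ) (t : ℕ → ℝ) (x : Fin N → ℝ) : ℝ :=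
  (∏ p ∈ Finset.univ.filter (fun p : Fin N × Fin N => p.1 < p.2), (x p.1 - x p.2) ^ 2) *
    Real.exp (-(N : ℝ) * ∑ i, Vt v t (x i))

/-- The eigenvalue partition function `Z_N(t)`. -/
def Z (v N : ℕ) (t : ℕ → ℝ) : ℝ :=
  ∫ x : Fin N → ℝ, dens v N t x

/-- Expectation of an eigenvalue statistic with respect to `P_{N,t}`. -/
def Ee (v N : ℕ) (t : ℕ → ℝ) (f : (Fin N → ℝ) → ℝ) : ℝ :=
  (∫ x : Fin N → ℝ, f x * dens v N t x) / Z v N t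

/-- The weighted logarithmic energy `∫ V_t dμ - ∫∫ log |λ-η| dμ dμ`. -/
def energy (v : ℕ) (t : ℕ → ℝ) (μ : Measure ℝ) : ℝ :=
  (∫ x, Vt v t x ∂μ) - ∫ x, (∫ y, Real.log |x - y| ∂μ) ∂μ

/-- `μ` is the equilibrium measure: a Borel probability measure minimizing the
weighted logarithmic energy. -/
def IsEqMeasure (v : ℕ) (t : ℕ → ℝ) (μ : Measure ℝ) : Prop :=
  IsProbabilityMeasure μ ∧
    ∀ ν : Measure ℝ, IsProbabilityMeasure ν → energy v t μ ≤ energy v t ν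

/-- The equilibrium density `(1/2π) χ_(α,β)(x) √((x-α)(β-x)) h(x)`. -/
def eqDensity (α β : ℝ) (h : Polynomial ℝ) (x : ℝ) : ℝ :=
  Set.indicator (Set.Ioo α β)
    (fun y => (2 * Real.pi)⁻¹ * Real.sqrt ((y - α) * (β - y)) * h.eval y) x

/-- The support of a measure on ℝ: points all of whose neighborhoods have
positive measure. -/
def msupport (μ : Measure ℝ) : Set ℝ :=
  {x | ∀ U ∈ nhds x, 0 < μ U}

/-- `ρ` is the one-point function: the density of the expected empirical
measure of eigenvalues. -/
def IsOnePoint (v N : ℕ) (t : ℕ → ℝ) (ρ : ℝ → ℝ) : Prop :=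
  ∀ A : Set ℝ, MeasurableSet A →
    ∫ x in A, ρ x = Ee v N t (fun x => (∑ j, Set.indicator A 1 (x j)) / N)

/-- Embedding of `v` real parameters `(t_1, …, t_v)` as a parameter function. -/
def pad (v : ℕ) (s : Fin v → ℝ) : ℕ → ℝ := fun j =>
  if h : 1 ≤ j ∧ j - 1 < v then s ⟨j - 1, h.2⟩ else 0

/-! Hermitian matrix model -/

/-- Real coordinates for an `N × N` Hermitian matrix: the diagonal entries and
the real and imaginary parts of the above-diagonal entries. -/
abbrev coords (N : ℕ) :=
  (Fin N → ℝ) × ({p : Fin N × Fin N // p.1 < p.2} → ℝ × ℝ)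

/-- The Hermitian matrix with the given real coordinates. -/
def herm (N : ℕ) (e : coords N) : Matrix (Fin N) (Fin N) ℂ := fun i j =>
  if hij : i < j then ⟨(e.2 ⟨(i, j), hij⟩).1, (e.2 ⟨(i, j), hij⟩).2⟩
  else if hji : j < i then ⟨(e.2 ⟨(j, i), hji⟩).1, -(e.2 ⟨(j, i), hji⟩).2⟩
  else ((e.1 i : ℝ) : ℂ)

/-- The matrix external field `V_t(M) = M^2/2 + ∑_{j=1}^v t_j M^j`. -/
def VtM (v N : ℕ) (t : ℕ → ℝ) (M : Matrix (Fin N) (Fin N) ℂ) :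
    Matrix (Fin N) (Fin N) ℂ :=
  (2⁻¹ : ℂ) • M ^ 2 + ∑ j ∈ Finset.Icc 1 v, ((t j : ℂ)) • M ^ j

/-- `V_t'(M) = M + ∑_{j=1}^v j t_j M^(j-1)`. -/
def Vt'M (v N : ℕ) (t : ℕ → ℝ) (M : Matrix (Fin N) (Fin N) ℂ) :
    Matrix (Fin N) (Fin N) ℂ :=
  M + ∑ j ∈ Finset.Icc 1 v, ((j : ℂ) * (t j : ℂ)) • M ^ (j - 1)

/-- The unnormalized density `exp(-N Tr V_t(M))` of the unitary ensemble
measure in the real coordinates of the Hermitian matrix `M`. -/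
def wt (v N : ℕ) (t : ℕ → ℝ) (e : coords N) : ℝ :=
  Real.exp (-(N : ℝ) * (Matrix.trace (VtM v N t (herm N e))).re)

/-- The matrix-model partition function `Z̃_N`. -/
def Zmat (v N : ℕ) (t : ℕ → ℝ) : ℝ :=
  ∫ e : coords N, wt v N t e

/-- Expectation `E` of a matrix statistic with respect to the unitary ensemble
measure `μ_t`. -/
def Em (v N : ℕ) (t : ℕ → ℝ) (f : coords N → ℂ) : ℂ :=
  (∫ e : coords N, f e * (wt v N t e : ℂ)) / (Zmat v N t : ℂ)

/-- The Green's function (resolvent) `G(z, M) = (z - M)⁻¹`. -/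
def G (N : ℕ) (z : ℂ) (M : Matrix (Fin N) (Fin N) ℂ) : Matrix (Fin N) (Fin N) ℂ :=
  (z • (1 : Matrix (Fin N) (Fin N) ℂ) - M)⁻¹

/-!
Confining the eigenvalues to `[-16, 16]` changes the partition function by an exponentially small
relative amount: by Jensen's inequality, moving a distant eigenvalue into `[0, 1]` gains an
exponential factor in `N`. On the confined ensemble integration by parts yields the loop equations.
Written for *all* products of power sums at once, that is, for a function `X` on words of exponents,
they are linear: `X = δ + K_t X + N⁻² B X` up to an exponentially small boundary term. In a weighted
sup norm `K_t` is a contraction for small `t`, whereas `B` is bounded at the cost of an arbitrarily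
small increase of the radius of the norm. Hence `X` can be solved for order by order in `N⁻²`, and
the coefficients are analytic in `t`. Finally `d/dτ log Z_N(τ t)` is `-N²` times a linear
combination of one-letter values of `X`, so that integrating along the ray `τ ↦ τ t` expands the
free energy.
-/

/-! ### Weights on letters and words -/

/-- The weight of the letter `k` at radius `r`. The factor `(k + 1)⁻²` makes the weights stable
under convolution. -/
def letterWeight (r : ℝ) (k : ℕ) : ℝ := 2 * r ^ k / ((k : ℝ) + 1) ^ 2

/-- The weight of a word, here a list of exponents standing for a product of power sums: the
product of the weights of its letters. -/
def wordWeight (r : ℝ) (κ : List ℕ) : ℝ := (κ.map (letterWeight r)).prod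

@[simp] lemma letterWeight_zero (r : ℝ) : letterWeight r 0 = 2 := by simp [letterWeight]

@[simp] lemma wordWeight_nil (r : ℝ) : wordWeight r [] = 1 := by simp [wordWeight]

@[simp] lemma wordWeight_cons (r : ℝ) (k : ℕ) (κ : List ℕ) :
    wordWeight r (k :: κ) = letterWeight r k * wordWeight r κ := by
  simp [wordWeight]

section WeightEstimates

variable {r : ℝ}

lemma letterWeight_pos (hr : 0 < r) (k : ℕ) : 0 < letterWeight r k := by
  unfold letterWeight; positivity

lemma wordWeight_pos (hr : 0 < r) (κ : List ℕ) : 0 < wordWeight r κ := by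
  induction κ with
  | nil => simp
  | cons k κ ih => rw [wordWeight_cons]; exact mul_pos (letterWeight_pos hr k) ih

lemma letterWeight_mono {s : ℝ} (hr : 0 < r) (h : r ≤ s) (k : ℕ) :
    letterWeight r k ≤ letterWeight s k := by
  unfold letterWeight; gcongr

lemma wordWeight_mono {s : ℝ} (hr : 0 < r) (h : r ≤ s) (κ : List ℕ) :
    wordWeight r κ ≤ wordWeight s κ := by
  induction κ with
  | nil => simp
  | cons k κ ih =>
    rw [wordWeight_cons, wordWeight_cons]
    exact mul_le_mul (letterWeight_mono hr h k) ih (wordWeight_pos hr κ).le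
      (letterWeight_pos (hr.trans_le h) k).le

lemma wordWeight_rescale {s : ℝ} (hs : 0 < s) (κ : List ℕ) :
    wordWeight r κ = (r / s) ^ κ.sum * wordWeight s κ := by
  induction κ with
  | nil => simp
  | cons k κ ih =>
    rw [wordWeight_cons, wordWeight_cons, ih, List.sum_cons, pow_add, letterWeight, letterWeight,
      div_pow, div_pow]
    field_simp

lemma pow_le_letterWeight {R : ℝ} (hR : 0 < R) (h : 4 * R ≤ r) (k : ℕ) :
    R ^ k ≤ letterWeight r k := by
  have sq_le_four_pow : ((k : ℝ) + 1) ^ 2 ≤ 2 * 4 ^ k := by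
    induction k with
    | zero => norm_num
    | succ n ih =>
      push_cast
      rw [pow_succ (4 : ℝ)]
      nlinarith [(by positivity : (0 : ℝ) ≤ n)]
  rw [letterWeight, le_div_iff₀ (by positivity)]
  calc R ^ k * ((k : ℝ) + 1) ^ 2 ≤ R ^ k * (2 * 4 ^ k) := by gcongr
    _ = 2 * (4 * R) ^ k := by ring
    _ ≤ 2 * r ^ k := by gcongr

lemma pow_sum_le_wordWeight {R : ℝ} (hR : 0 < R) (h : 4 * R ≤ r) (κ : List ℕ) :
    R ^ κ.sum ≤ wordWeight r κ := by
  induction κ with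
  | nil => simp
  | cons k κ ih =>
    rw [wordWeight_cons, List.sum_cons, pow_add]
    exact mul_le_mul (pow_le_letterWeight hR h k) ih (by positivity)
      (letterWeight_pos (by linarith) k).le

lemma sum_range_one_div_succ_sq_le (n : ℕ) :
    ∑ a ∈ range n, 1 / ((a : ℝ) + 1) ^ 2 ≤ 2 := by
  have h := sum_Ioo_inv_sq_le (α := ℝ) 0 (n + 1)
  rw [← Finset.Ico_succ_left_eq_Ioo, Finset.sum_Ico_eq_sum_range] at h
  simpa [add_comm] using h

lemma letterWeight_mul_le (hr : 0 ≤ r) (a b : ℕ) :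
    letterWeight r a * letterWeight r b ≤ 8 * r ^ (a + b) / ((a + b : ℕ) + 2) ^ 2 *
      (1 / ((a : ℝ) + 1) ^ 2 + 1 / ((b : ℝ) + 1) ^ 2) := by
  have harmonic : 1 / (((a : ℝ) + 1) ^ 2 * ((b : ℝ) + 1) ^ 2) ≤ 2 / ((a + b : ℕ) + 2) ^ 2 *
      (1 / ((a : ℝ) + 1) ^ 2 + 1 / ((b : ℝ) + 1) ^ 2) := by
    push_cast
    rw [div_add_div _ _ (by positivity) (by positivity), div_mul_div_comm,
      div_le_div_iff₀ (by positivity) (by positivity)]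
    nlinarith [mul_nonneg (by positivity : 0 ≤ ((a : ℝ) + 1) ^ 2 * ((b : ℝ) + 1) ^ 2)
      (sq_nonneg ((a : ℝ) - b))]
  calc letterWeight r a * letterWeight r b
      = 4 * r ^ (a + b) * (1 / (((a : ℝ) + 1) ^ 2 * ((b : ℝ) + 1) ^ 2)) := by
        rw [letterWeight, letterWeight, pow_add]; field_simp; ring
    _ ≤ 4 * r ^ (a + b) * _ := mul_le_mul_of_nonneg_left harmonic (by positivity)
    _ = _ := by ring

lemma letterWeight_convolution_le (hr : 16 ≤ r) (k : ℕ) :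
    ∑ a ∈ range k, letterWeight r a * letterWeight r (k - 1 - a) ≤
      1 / 4 * letterWeight r (k + 1) := by
  obtain _ | n := k
  · simpa using (letterWeight_pos (by linarith : 0 < r) 1).le
  have term_le : ∀ a ∈ range (n + 1), letterWeight r a * letterWeight r (n + 1 - 1 - a) ≤
      8 * r ^ n / ((n : ℝ) + 2) ^ 2 *
        (1 / ((a : ℝ) + 1) ^ 2 + 1 / (((n + 1 - 1 - a : ℕ) : ℝ) + 1) ^ 2) := fun a ha => by
    have hsum : a + (n + 1 - 1 - a) = n := by have := mem_range.mp ha; omega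
    simpa only [hsum] using letterWeight_mul_le (by linarith : 0 ≤ r) a (n + 1 - 1 - a)
  have reflected := sum_range_reflect (fun a : ℕ => 1 / ((a : ℝ) + 1) ^ 2) (n + 1)
  have h256 : (256 : ℝ) ≤ r ^ 2 := by nlinarith
  calc ∑ a ∈ range (n + 1), letterWeight r a * letterWeight r (n + 1 - 1 - a)
      ≤ 8 * r ^ n / ((n : ℝ) + 2) ^ 2 * (2 + 2) := by
        refine (sum_le_sum term_le).trans ?_
        rw [← mul_sum, sum_add_distrib, reflected]
        gcongr <;> exact sum_range_one_div_succ_sq_le _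
    _ ≤ 1 / 4 * letterWeight r (n + 1 + 1) := by
        rw [letterWeight, div_mul_eq_mul_div, mul_div_assoc', div_le_div_iff₀ (by positivity)
          (by positivity)]
        push_cast
        have : ((n : ℝ) + 1 + 1 + 1) ^ 2 ≤ 4 * ((n : ℝ) + 2) ^ 2 := by
          nlinarith [n.cast_nonneg (α := ℝ)]
        calc 8 * r ^ n * (2 + 2) * ((n : ℝ) + 1 + 1 + 1) ^ 2
            ≤ 8 * r ^ n * (2 + 2) * (4 * ((n : ℝ) + 2) ^ 2) := by gcongr
          _ = 256 * (1 / 2 * r ^ n * ((n : ℝ) + 2) ^ 2) := by ring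
          _ ≤ r ^ 2 * (1 / 2 * r ^ n * ((n : ℝ) + 2) ^ 2) := by gcongr
          _ = _ := by ring

lemma letterWeight_add_le (hr : 1 ≤ r) (k j : ℕ) :
    letterWeight r (k + j) ≤ 4 * r ^ j * letterWeight r (k + 1) := by
  rw [letterWeight, letterWeight, ← mul_div_assoc,
    div_le_div_iff₀ (by positivity) (by positivity)]
  push_cast
  have : ((k : ℝ) + 1 + 1) ^ 2 ≤ 4 * ((k : ℝ) + j + 1) ^ 2 := by
    nlinarith [(by positivity : (0 : ℝ) ≤ k), (by positivity : (0 : ℝ) ≤ j)]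
  have : r ^ (k + j) ≤ r ^ j * r ^ (k + 1) := by
    rw [← pow_add]; exact pow_le_pow_right₀ hr (by omega)
  calc 2 * r ^ (k + j) * ((k : ℝ) + 1 + 1) ^ 2
      ≤ 2 * (r ^ j * r ^ (k + 1)) * (4 * ((k : ℝ) + j + 1) ^ 2) := by gcongr
    _ = _ := by ring

lemma succ_mul_letterWeight_add_le (hr : 1 ≤ r) (k : ℕ) {j v : ℕ} (hj : j < v) :
    ((j : ℝ) + 1) * letterWeight r (k + j) ≤ 4 * v * r ^ v * letterWeight r (k + 1) := by
  have : ((j : ℝ) + 1) ≤ v := by exact_mod_cast hj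
  have : r ^ j ≤ r ^ v := pow_le_pow_right₀ hr hj.le
  have := letterWeight_pos (by linarith : 0 < r) (k + 1)
  calc ((j : ℝ) + 1) * letterWeight r (k + j)
      ≤ v * (4 * r ^ v * letterWeight r (k + 1)) := by
        refine mul_le_mul ‹_› ((letterWeight_add_le hr k j).trans (by gcongr)) ?_ (by positivity)
        exact (letterWeight_pos (by linarith) _).le
    _ = _ := by ring

lemma mul_letterWeight_merge_le (hr : 2 ≤ r) (k q : ℕ) :
    (q : ℝ) * letterWeight r (k + q - 1) ≤
      q * ((q : ℝ) + 1) ^ 2 * (letterWeight r (k + 1) * letterWeight r q) := by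
  obtain _ | q := q
  · simp
  rw [mul_assoc]
  refine mul_le_mul_of_nonneg_left ?_ (by positivity)
  rw [show k + (q + 1) - 1 = k + q by omega]
  have rhs_eq : (((q + 1 : ℕ) : ℝ) + 1) ^ 2 * (letterWeight r (k + 1) * letterWeight r (q + 1)) =
      2 * r ^ (q + 1) * letterWeight r (k + 1) := by
    unfold letterWeight; field_simp
  rw [rhs_eq]
  refine (letterWeight_add_le (by linarith) k q).trans ?_
  have := letterWeight_pos (by linarith : 0 < r) (k + 1)
  refine mul_le_mul_of_nonneg_right ?_ this.le
  rw [pow_succ]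
  nlinarith [pow_pos (by linarith : 0 < r) q]

end WeightEstimates

/-! ### Weighted sup bounds -/

/-- `X` has weighted sup norm at most `M` for the weight `w`. -/
def WeightBounded {ι E : Type*} [Norm E] (w : ι → ℝ) (M : ℝ) (X : ι → E) : Prop :=
  ∀ i, ‖X i‖ ≤ M * w i

namespace WeightBounded

variable {ι E : Type*} [SeminormedAddCommGroup E] {w : ι → ℝ} {M M' : ℝ} {X Y : ι → E}

lemma nonneg (h : WeightBounded w M X) {i : ι} (hi : 0 < w i) : 0 ≤ M :=
  nonneg_of_mul_nonneg_left ((norm_nonneg _).trans (h i)) hi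

lemma add (h : WeightBounded w M X) (h' : WeightBounded w M' Y) :
    WeightBounded w (M + M') (X + Y) := fun i => by
  rw [add_mul]; exact norm_add_le_of_le (h i) (h' i)

lemma sub (h : WeightBounded w M X) (h' : WeightBounded w M' Y) :
    WeightBounded w (M + M') (X - Y) := fun i => by
  rw [add_mul]; exact norm_sub_le_of_le (h i) (h' i)

lemma smul {𝕜 : Type*} [NormedField 𝕜] [NormedSpace 𝕜 E] (c : 𝕜) (h : WeightBounded w M X) :
    WeightBounded w (‖c‖ * M) (c • X) := fun i => by
  rw [Pi.smul_apply, norm_smul, mul_assoc]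
  exact mul_le_mul_of_nonneg_left (h i) (norm_nonneg _)

lemma sum {κ : Type*} (s : Finset κ) {m : κ → ℝ} {Z : κ → ι → E}
    (h : ∀ j ∈ s, WeightBounded w (m j) (Z j)) :
    WeightBounded w (∑ j ∈ s, m j) (∑ j ∈ s, Z j) := fun i => by
  rw [Finset.sum_apply, sum_mul]
  exact norm_sum_le_of_le _ fun j hj => h j hj i

lemma mono {w' : ι → ℝ} (h : WeightBounded w M X) (hw : ∀ i, 0 < w i) (hww' : ∀ i, w i ≤ w' i)
    (hM : M ≤ M') : WeightBounded w' M' X := fun i =>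
  (h i).trans (mul_le_mul hM (hww' i) (hw i).le ((h.nonneg (hw i)).trans hM))

lemma mono_const (h : WeightBounded w M X) (hw : ∀ i, 0 < w i) (hM : M ≤ M') :
    WeightBounded w M' X :=
  h.mono hw (fun _ => le_rfl) hM

lemma of_eq_add_contraction {F : ι → E} {Φ : (ι → E) → ι → E} {q d : ℝ} (hq : 0 ≤ q)
    (hq1 : q < 1) (hΦ : ∀ m, WeightBounded w m X → WeightBounded w (q * m) (Φ X))
    (h : WeightBounded w M X) (hF : WeightBounded w d F) (hX : X = F + Φ X) :
    WeightBounded w (d / (1 - q)) X := by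
  have iterate (n : ℕ) : WeightBounded w (q ^ n * (M - d / (1 - q)) + d / (1 - q)) X := by
    induction n with
    | zero => simpa using h
    | succ n ih =>
      have next := hF.add (hΦ _ ih)
      rw [← hX] at next
      convert next using 1
      field_simp [(sub_pos.mpr hq1).ne']
      ring
  intro i
  have limit := (((tendsto_pow_atTop_nhds_zero_of_lt_one hq hq1).mul_const
    (M - d / (1 - q))).add_const (d / (1 - q))).mul_const (w i)
  rw [zero_mul, zero_add] at limit
  exact ge_of_tendsto' limit fun n => iterate n i

end WeightBounded

/-- The Banach space of bounded complex functions on an index type. -/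
abbrev BoundedFunctions (ι : Type*) := lp (fun _ : ι => ℂ) ⊤

/-- Pointwise multiplication by the weight `w`, which identifies bounded functions with the
functions of finite weighted sup norm. -/
def weightMul {ι : Type*} (w : ι → ℝ) : BoundedFunctions ι →ₗ[ℂ] (ι → ℂ) where
  toFun Y i := w i * Y i
  map_add' Y Y' := by ext i; simp [mul_add]
  map_smul' c Y := by ext i; simp [mul_left_comm]

section WeightMul

variable {ι ι' : Type*} {w : ι → ℝ} {w' : ι' → ℝ}

lemma weightMul_apply (w : ι → ℝ) (Y : BoundedFunctions ι) (i : ι) :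
    weightMul w Y i = w i * Y i := rfl

lemma weightMul_injective (hw : ∀ i, 0 < w i) : Function.Injective (weightMul w) := by
  intro Y Y' h
  ext i
  exact mul_left_cancel₀ (Complex.ofReal_ne_zero.mpr (hw i).ne') (congrFun h i)

lemma weightBounded_weightMul (hw : ∀ i, 0 < w i) (Y : BoundedFunctions ι) :
    WeightBounded w ‖Y‖ (weightMul w Y) := fun i => by
  rw [weightMul_apply, norm_mul, Complex.norm_real, Real.norm_of_nonneg (hw i).le, mul_comm]
  exact mul_le_mul_of_nonneg_right (lp.norm_apply_le_norm (by simp) Y i) (hw i).le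

lemma WeightBounded.exists_weightMul_eq [Nonempty ι] (hw : ∀ i, 0 < w i) {M : ℝ} {X : ι → ℂ}
    (h : WeightBounded w M X) : ∃ Y, weightMul w Y = X ∧ ‖Y‖ ≤ M := by
  have quotient_le (i : ι) : ‖X i / (w i : ℂ)‖ ≤ M := by
    rw [norm_div, Complex.norm_real, Real.norm_of_nonneg (hw i).le, div_le_iff₀ (hw i)]
    exact h i
  refine ⟨⟨fun i => X i / (w i : ℂ), memℓp_infty ⟨M, Set.forall_mem_range.mpr quotient_le⟩⟩, ?_,
    lp.norm_le_of_forall_le' _ quotient_le⟩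
  ext i
  exact mul_div_cancel₀ (X i) (Complex.ofReal_ne_zero.mpr (hw i).ne')

lemma norm_le_of_weightBounded_weightMul [Nonempty ι] (hw : ∀ i, 0 < w i) {M : ℝ}
    {Y : BoundedFunctions ι} (h : WeightBounded w M (weightMul w Y)) : ‖Y‖ ≤ M := by
  obtain ⟨Y', hY', hM⟩ := h.exists_weightMul_eq hw
  rwa [weightMul_injective hw hY'] at hM

lemma exists_continuousLinearMap_weightMul_eq [Nonempty ι'] (hw : ∀ i, 0 < w i)
    (hw' : ∀ i, 0 < w' i) (Φ : (ι → ℂ) →ₗ[ℂ] (ι' → ℂ)) {C : ℝ}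
    (hΦ : ∀ M X, WeightBounded w M X → WeightBounded w' (C * M) (Φ X)) :
    ∃ L : BoundedFunctions ι →L[ℂ] BoundedFunctions ι',
      ∀ Y, weightMul w' (L Y) = Φ (weightMul w Y) := by
  choose f hf hf_le using fun Y =>
    (hΦ _ _ (weightBounded_weightMul hw Y)).exists_weightMul_eq hw'
  let L : BoundedFunctions ι →ₗ[ℂ] BoundedFunctions ι' :=
    { toFun := f
      map_add' := fun Y Y' => weightMul_injective hw' (by simp only [map_add, hf])
      map_smul' := fun c Y => weightMul_injective hw' (by
        simp only [map_smul, hf, RingHom.id_apply]) }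
  exact ⟨L.mkContinuous C hf_le, hf⟩

end WeightMul

section Resolvent

variable {E F : Type*} [NormedAddCommGroup E] [NormedSpace ℂ E] [NormedAddCommGroup F]
  [NormedSpace ℂ F]

lemma analyticAt_clm_apply {G : Type*} [NormedAddCommGroup G] [NormedSpace ℂ G]
    {f : E → F →L[ℂ] G} {g : E → F} {x : E} (hf : AnalyticAt ℂ f x) (hg : AnalyticAt ℂ g x) :
    AnalyticAt ℂ (fun y => f y (g y)) x :=
  AnalyticAt.fun_comp (g := fun p : (F →L[ℂ] G) × F => p.1 p.2) (f := fun y => (f y, g y))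
    ((ContinuousLinearMap.id ℂ (F →L[ℂ] G)).analyticAt_bilinear (f x, g x)) (hf.prod hg)

lemma analyticAt_ringInverse_one_sub [CompleteSpace F] {L : E → F →L[ℂ] F} {x : E}
    (hL : AnalyticAt ℂ L x) (hx : ‖L x‖ < 1) :
    AnalyticAt ℂ (fun y => Ring.inverse (1 - L y)) x := by
  have h := analyticAt_inverse (𝕜 := ℂ) (Units.oneSub (L x) hx)
  exact AnalyticAt.fun_comp (by simpa using h) (analyticAt_const.sub hL)

lemma ringInverse_one_sub_apply [CompleteSpace F] {L : F →L[ℂ] F} (hL : ‖L‖ < 1) (y : F) :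
    Ring.inverse (1 - L) y = y + L (Ring.inverse (1 - L) y) := by
  have h := congrArg (fun A : F →L[ℂ] F => A y)
    (Ring.mul_inverse_cancel _ (isUnit_one_sub_of_norm_lt_one hL))
  exact sub_eq_iff_eq_add.mp h

end Resolvent

/-! ### The operators of the loop equations -/

section LoopOperators

variable (R : Type*) [CommRing R]

/-- The Gaussian part of the loop equations: the leading power sum `p_{k+1}` of a word is split
into the products `p_a p_{k-1-a}`, and a leading `p_0` is removed. -/
def splitOp : (List ℕ → R) →ₗ[R] (List ℕ → R) :=
  LinearMap.pi fun
    | [] => 0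
    | 0 :: κ => LinearMap.proj κ
    | (k + 1) :: κ => ∑ a ∈ range k, LinearMap.proj (a :: (k - 1 - a) :: κ)

/-- The contribution to the loop equations of the monomial of degree `j + 1` in the external
field. -/
def potentialOp (j : ℕ) : (List ℕ → R) →ₗ[R] (List ℕ → R) :=
  LinearMap.pi fun
    | (k + 1) :: κ => -(((j : R) + 1) • LinearMap.proj ((k + j) :: κ))
    | _ => 0

/-- The operator merging the leading letter of a word with each of the other letters; it carries
the factor `N⁻²` in the loop equations. The truncated subtraction is harmless because a letter `0`
contributes with coefficient `0`. -/
def mergeOp : (List ℕ → R) →ₗ[R] (List ℕ → R) :=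
  LinearMap.pi fun
    | (k + 1) :: κ =>
      ∑ l : Fin κ.length, (κ[l] : R) • LinearMap.proj ((k + κ[l] - 1) :: κ.eraseIdx l)
    | _ => 0

variable {R}

/-- The operator of the loop equations in the limit `N → ∞`; the coupling `t j` multiplies the
monomial of degree `j + 1`. -/
def transferOp {v : ℕ} (t : Fin v → R) : (List ℕ → R) →ₗ[R] (List ℕ → R) :=
  splitOp R + ∑ j : Fin v, t j • potentialOp R j

variable {v : ℕ} (t : Fin v → R) (X : List ℕ → R) (k : ℕ) (κ : List ℕ)

@[simp] lemma splitOp_nil : splitOp R X [] = 0 := rfl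

@[simp] lemma splitOp_zero_cons : splitOp R X (0 :: κ) = X κ := rfl

@[simp] lemma splitOp_succ_cons :
    splitOp R X ((k + 1) :: κ) = ∑ a ∈ range k, X (a :: (k - 1 - a) :: κ) := by
  simp [splitOp]

@[simp] lemma potentialOp_nil (j : ℕ) : potentialOp R j X [] = 0 := rfl

@[simp] lemma potentialOp_zero_cons (j : ℕ) : potentialOp R j X (0 :: κ) = 0 := rfl

@[simp] lemma potentialOp_succ_cons (j : ℕ) :
    potentialOp R j X ((k + 1) :: κ) = -(((j : R) + 1) * X ((k + j) :: κ)) := rfl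

@[simp] lemma mergeOp_nil : mergeOp R X [] = 0 := rfl

@[simp] lemma mergeOp_zero_cons : mergeOp R X (0 :: κ) = 0 := rfl

@[simp] lemma mergeOp_succ_cons :
    mergeOp R X ((k + 1) :: κ) =
      ∑ l : Fin κ.length, (κ[l] : R) * X ((k + κ[l] - 1) :: κ.eraseIdx l) := by
  simp [mergeOp]

lemma transferOp_apply :
    transferOp t X κ = splitOp R X κ + ∑ j : Fin v, t j * potentialOp R j X κ := by
  simp [transferOp]

variable {S : Type*} [CommRing S] (φ : R →+* S)

lemma splitOp_comp_ringHom : splitOp S (φ ∘ X) = φ ∘ splitOp R X := by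
  ext κ
  rcases κ with _ | ⟨_ | k, κ⟩ <;> simp

lemma potentialOp_comp_ringHom (j : ℕ) : potentialOp S j (φ ∘ X) = φ ∘ potentialOp R j X := by
  ext κ
  rcases κ with _ | ⟨_ | k, κ⟩ <;> simp

lemma mergeOp_comp_ringHom : mergeOp S (φ ∘ X) = φ ∘ mergeOp R X := by
  ext κ
  rcases κ with _ | ⟨_ | k, κ⟩ <;> simp

lemma transferOp_comp_ringHom : transferOp (φ ∘ t) (φ ∘ X) = φ ∘ transferOp t X := by
  ext κ
  simp [transferOp_apply, splitOp_comp_ringHom, potentialOp_comp_ringHom]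

end LoopOperators

section OperatorBounds

variable {r M : ℝ} {X : List ℕ → ℂ}

lemma weightBounded_splitOp (hr : 16 ≤ r) (h : WeightBounded (wordWeight r) M X) :
    WeightBounded (wordWeight r) (1 / 2 * M) (splitOp ℂ X) := by
  have hr0 : 0 < r := by linarith
  have hM : 0 ≤ M := h.nonneg (wordWeight_pos hr0 [])
  rintro (_ | ⟨_ | k, κ⟩)
  · simpa using hM
  · rw [splitOp_zero_cons, wordWeight_cons, letterWeight_zero]
    linarith [h κ]
  · have hκ := wordWeight_pos hr0 κ
    have hk := letterWeight_pos hr0 (k + 1)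
    rw [splitOp_succ_cons, wordWeight_cons]
    calc ‖∑ a ∈ range k, X (a :: (k - 1 - a) :: κ)‖
        ≤ ∑ a ∈ range k, M * wordWeight r (a :: (k - 1 - a) :: κ) :=
          norm_sum_le_of_le _ fun a _ => h _
      _ = M * wordWeight r κ * ∑ a ∈ range k, letterWeight r a * letterWeight r (k - 1 - a) := by
          rw [mul_sum]
          exact sum_congr rfl fun a _ => by rw [wordWeight_cons, wordWeight_cons]; ring
      _ ≤ M * wordWeight r κ * (1 / 2 * letterWeight r (k + 1)) := by
          gcongr
          exact (letterWeight_convolution_le hr k).trans (by gcongr; norm_num)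
      _ = _ := by ring

lemma weightBounded_potentialOp (hr : 1 ≤ r) {v j : ℕ} (hj : j < v)
    (h : WeightBounded (wordWeight r) M X) :
    WeightBounded (wordWeight r) (4 * v * r ^ v * M) (potentialOp ℂ j X) := by
  have hr0 : 0 < r := by linarith
  have hM : 0 ≤ M := h.nonneg (wordWeight_pos hr0 [])
  intro κ
  have hκ := wordWeight_pos hr0 κ
  obtain _ | ⟨_ | k, κ⟩ := κ
  · rw [potentialOp_nil, norm_zero]; positivity
  · rw [potentialOp_zero_cons, norm_zero]; positivity
  · have hκ := wordWeight_pos hr0 κ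
    have norm_succ : ‖(j : ℂ) + 1‖ = j + 1 := by exact_mod_cast Complex.norm_natCast (j + 1)
    rw [potentialOp_succ_cons, norm_neg, norm_mul, norm_succ]
    calc ((j : ℝ) + 1) * ‖X ((k + j) :: κ)‖
        ≤ (j + 1) * (M * wordWeight r ((k + j) :: κ)) := by gcongr; exact h _
      _ = M * wordWeight r κ * ((j + 1) * letterWeight r (k + j)) := by rw [wordWeight_cons]; ring
      _ ≤ M * wordWeight r κ * (4 * v * r ^ v * letterWeight r (k + 1)) :=
          mul_le_mul_of_nonneg_left (succ_mul_letterWeight_add_le hr k hj) (by positivity)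
      _ = _ := by rw [wordWeight_cons]; ring

lemma weightBounded_transferOp (hr : 16 ≤ r) {v : ℕ} {t : Fin v → ℂ}
    (ht : (∑ j, ‖t j‖) * (4 * v * r ^ v) ≤ 1 / 4) (h : WeightBounded (wordWeight r) M X) :
    WeightBounded (wordWeight r) (3 / 4 * M) (transferOp t X) := by
  have hpos := wordWeight_pos (by linarith : 0 < r)
  have hM : 0 ≤ M := h.nonneg (hpos [])
  have bound := (weightBounded_splitOp hr h).add (WeightBounded.sum univ fun (j : Fin v) _ =>
    (weightBounded_potentialOp (by linarith) j.2 h).smul (t j))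
  simp only [transferOp, LinearMap.add_apply, LinearMap.coe_sum, Finset.sum_apply,
    LinearMap.smul_apply]
  refine bound.mono_const hpos ?_
  have factored : ∑ j : Fin v, ‖t j‖ * (4 * v * r ^ v * M) =
      (∑ j, ‖t j‖) * (4 * v * r ^ v) * M := by
    simp only [sum_mul, mul_assoc]
  rw [factored]
  nlinarith

lemma letterWeight_mul_wordWeight_eraseIdx (r : ℝ) (κ : List ℕ) (l : Fin κ.length) :
    letterWeight r κ[l] * wordWeight r (κ.eraseIdx l) = wordWeight r κ := by
  have := List.CommMonoid.mul_prod_eraseIdx (l := κ.map (letterWeight r)) (i := l) (by simp)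
  simpa [wordWeight, List.eraseIdx_map] using this

lemma sum_mul_succ_sq_le (κ : List ℕ) :
    ∑ l : Fin κ.length, (κ[l] : ℝ) * ((κ[l] : ℝ) + 1) ^ 2 ≤ ((κ.sum : ℝ) + 1) ^ 3 := by
  have as_list_sum : ∑ l : Fin κ.length, (κ[l] : ℝ) * ((κ[l] : ℝ) + 1) ^ 2 =
      (κ.map fun q : ℕ => (q : ℝ) * ((q : ℝ) + 1) ^ 2).sum := by
    rw [← Fin.sum_univ_fun_getElem]; rfl
  rw [as_list_sum]
  clear as_list_sum
  induction κ with
  | nil => simp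
  | cons q κ ih =>
    have hq : (0 : ℝ) ≤ q := by positivity
    have hs : (0 : ℝ) ≤ (κ.sum : ℝ) := by positivity
    simp only [List.map_cons, List.sum_cons, Nat.cast_add]
    nlinarith [ih, mul_nonneg hq hs, mul_nonneg (mul_nonneg hq hq) hs,
      mul_nonneg (mul_nonneg hq hs) hs]

lemma norm_mergeOp_le (hr : 2 ≤ r) (h : WeightBounded (wordWeight r) M X) (κ : List ℕ) :
    ‖mergeOp ℂ X κ‖ ≤ M * wordWeight r κ * ((κ.sum : ℝ) + 1) ^ 3 := by
  have hr0 : 0 < r := by linarith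
  have hM : 0 ≤ M := h.nonneg (wordWeight_pos hr0 [])
  have hκ := wordWeight_pos hr0 κ
  obtain _ | ⟨_ | k, κ⟩ := κ
  · rw [mergeOp_nil, norm_zero]; positivity
  · rw [mergeOp_zero_cons, norm_zero]; positivity
  have term_le (l : Fin κ.length) : ‖(κ[l] : ℂ) * X ((k + κ[l] - 1) :: κ.eraseIdx l)‖ ≤
      M * wordWeight r ((k + 1) :: κ) * ((κ[l] : ℝ) * ((κ[l] : ℝ) + 1) ^ 2) := by
    have hl := wordWeight_pos hr0 (κ.eraseIdx l)
    rw [norm_mul, Complex.norm_natCast]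
    calc (κ[l] : ℝ) * ‖X ((k + κ[l] - 1) :: κ.eraseIdx l)‖
        ≤ κ[l] * (M * wordWeight r ((k + κ[l] - 1) :: κ.eraseIdx l)) := by gcongr; exact h _
      _ = M * wordWeight r (κ.eraseIdx l) * (κ[l] * letterWeight r (k + κ[l] - 1)) := by
          rw [wordWeight_cons]; ring
      _ ≤ M * wordWeight r (κ.eraseIdx l) *
          (κ[l] * ((κ[l] : ℝ) + 1) ^ 2 * (letterWeight r (k + 1) * letterWeight r κ[l])) :=
          mul_le_mul_of_nonneg_left (mul_letterWeight_merge_le hr k _) (by positivity)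
      _ = _ := by rw [wordWeight_cons, ← letterWeight_mul_wordWeight_eraseIdx r κ l]; ring
  rw [mergeOp_succ_cons]
  calc _ ≤ ∑ l : Fin κ.length,
        M * wordWeight r ((k + 1) :: κ) * ((κ[l] : ℝ) * ((κ[l] : ℝ) + 1) ^ 2) :=
        norm_sum_le_of_le _ fun l _ => term_le l
    _ ≤ M * wordWeight r ((k + 1) :: κ) * ((κ.sum : ℝ) + 1) ^ 3 := by
        rw [← mul_sum]; gcongr; exact sum_mul_succ_sq_le κ
    _ ≤ _ := by gcongr; simp

lemma exists_succ_pow_mul_pow_le (n : ℕ) {q : ℝ} (hq : 0 < q) (hq1 : q < 1) :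
    ∃ C : ℝ, ∀ m : ℕ, ((m : ℝ) + 1) ^ n * q ^ m ≤ C := by
  obtain ⟨C, hC⟩ := (tendsto_pow_const_mul_const_pow_of_abs_lt_one n
    (by rwa [abs_of_pos hq])).bddAbove_range
  refine ⟨C / q, fun m => ?_⟩
  have hm : ((m + 1 : ℕ) : ℝ) ^ n * q ^ (m + 1) ≤ C := hC ⟨m + 1, rfl⟩
  rw [le_div_iff₀ hq, mul_assoc, ← pow_succ]
  exact_mod_cast hm

lemma exists_weightBounded_mergeOp {s : ℝ} (hr : 2 ≤ r) (hrs : r < s) :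
    ∃ C : ℝ, ∀ (M : ℝ) (X : List ℕ → ℂ), WeightBounded (wordWeight r) M X →
      WeightBounded (wordWeight s) (C * M) (mergeOp ℂ X) := by
  have hr0 : 0 < r := by linarith
  have hs0 : 0 < s := hr0.trans hrs
  obtain ⟨C, hC⟩ := exists_succ_pow_mul_pow_le 3 (div_pos hr0 hs0) ((div_lt_one hs0).mpr hrs)
  refine ⟨C, fun M X h κ => (norm_mergeOp_le hr h κ).trans ?_⟩
  have hM : 0 ≤ M := h.nonneg (wordWeight_pos hr0 [])
  have hκ := wordWeight_pos hs0 κ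
  calc M * wordWeight r κ * ((κ.sum : ℝ) + 1) ^ 3
      = M * wordWeight s κ * (((κ.sum : ℝ) + 1) ^ 3 * (r / s) ^ κ.sum) := by
        rw [wordWeight_rescale hs0 κ]; ring
    _ ≤ M * wordWeight s κ * C := mul_le_mul_of_nonneg_left (hC _) (by positivity)
    _ = C * M * wordWeight s κ := by ring

end OperatorBounds

/-! ### Solving the loop equations order by order -/

/-- The radii at which the successive orders of the expansion are bounded. They increase because
`mergeOp` loses radius, and stay below `128` so that the transfer operator is a contraction at all
orders simultaneously. -/
def radius (g : ℕ) : ℝ := 64 * (2 - (1 / 2) ^ g)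

lemma radius_zero : radius 0 = 64 := by norm_num [radius]

lemma radius_lt_radius_succ (g : ℕ) : radius g < radius (g + 1) := by
  have : (0 : ℝ) < (1 / 2) ^ g := by positivity
  rw [radius, radius, pow_succ]
  linarith

lemma sixty_four_le_radius (g : ℕ) : 64 ≤ radius g := by
  have : (1 / 2 : ℝ) ^ g ≤ 1 := pow_le_one₀ (by norm_num) (by norm_num)
  rw [radius]
  linarith

lemma sixteen_le_radius (g : ℕ) : 16 ≤ radius g := by linarith [sixty_four_le_radius g]

lemma radius_pos (g : ℕ) : 0 < radius g := by linarith [sixty_four_le_radius g]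

lemma radius_le (g : ℕ) : radius g ≤ 128 := by
  have : (0 : ℝ) < (1 / 2) ^ g := by positivity
  rw [radius]
  linarith

/-- The size of the couplings for which the loop equations are solved perturbatively. -/
def couplingRadius (v : ℕ) : ℝ := 1 / (16 * ((v : ℝ) + 1) * 128 ^ v)

/-- The complex couplings for which the loop equations are solved perturbatively. -/
def couplingBall (v : ℕ) : Set (Fin v → ℂ) := {t | ∑ j, ‖t j‖ < couplingRadius v}

lemma couplingRadius_pos (v : ℕ) : 0 < couplingRadius v := by
  unfold couplingRadius; positivity

section CouplingBall

variable {v : ℕ} {t : Fin v → ℂ}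

lemma zero_mem_couplingBall : (0 : Fin v → ℂ) ∈ couplingBall v := by
  simpa [couplingBall] using couplingRadius_pos v

lemma couplingBall_mem_nhds (ht : t ∈ couplingBall v) : couplingBall v ∈ nhds t :=
  (isOpen_lt (by fun_prop) continuous_const).mem_nhds ht

lemma smul_mem_couplingBall (ht : t ∈ couplingBall v) {c : ℂ} (hc : ‖c‖ ≤ 1) :
    c • t ∈ couplingBall v := by
  refine lt_of_le_of_lt (b := ∑ j, ‖t j‖) (sum_le_sum fun j _ => ?_) ht
  rw [Pi.smul_apply, norm_smul]
  exact mul_le_of_le_one_left (norm_nonneg _) hc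

lemma sum_norm_mul_le_of_mem_couplingBall (ht : t ∈ couplingBall v) (g : ℕ) :
    (∑ j, ‖t j‖) * (4 * v * radius g ^ v) ≤ 1 / 4 := by
  have := radius_pos g
  have := radius_le g
  have := couplingRadius_pos v
  have hsum : ∑ j, ‖t j‖ ≤ couplingRadius v := le_of_lt ht
  calc (∑ j, ‖t j‖) * (4 * v * radius g ^ v)
      ≤ couplingRadius v * (4 * (v + 1) * 128 ^ v) := by gcongr; linarith
    _ = 1 / 4 := by rw [couplingRadius]; field_simp; norm_num

end CouplingBall

/-- The terms `S g` of the expansion in powers `N^(-2g)` of a solution of the loop equations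
`X = δ_[] + K_t X + N⁻² B X`, where `K_t = transferOp t` and `B = mergeOp ℂ`. -/
structure IsGenusExpansion {v : ℕ} (t : Fin v → ℂ) (S : ℕ → List ℕ → ℂ) : Prop where
  bounded : ∀ g, ∃ M, WeightBounded (wordWeight (radius g)) M (S g)
  zero : S 0 = Pi.single [] 1 + transferOp t (S 0)
  succ : ∀ g, S (g + 1) = mergeOp ℂ (S g) + transferOp t (S (g + 1))

section Stability

variable {v g : ℕ} {t : Fin v → ℂ} {M M' d : ℝ} {X Y F : List ℕ → ℂ}

lemma weightBounded_of_eq_add_transferOp (ht : t ∈ couplingBall v)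
    (h : WeightBounded (wordWeight (radius g)) M X)
    (hF : WeightBounded (wordWeight (radius g)) d F) (hX : X = F + transferOp t X) :
    WeightBounded (wordWeight (radius g)) (4 * d) X := by
  rw [show 4 * d = d / (1 - 3 / 4) by ring]
  exact WeightBounded.of_eq_add_contraction (by norm_num) (by norm_num)
    (fun _ hm => weightBounded_transferOp (sixteen_le_radius g)
      (sum_norm_mul_le_of_mem_couplingBall ht g) hm) h hF hX

lemma eq_of_eq_add_transferOp (ht : t ∈ couplingBall v)
    (hX : WeightBounded (wordWeight (radius g)) M X) (hX' : X = F + transferOp t X)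
    (hY : WeightBounded (wordWeight (radius g)) M' Y) (hY' : Y = F + transferOp t Y) : X = Y := by
  have homogeneous : X - Y = 0 + transferOp t (X - Y) := by
    rw [map_sub, zero_add]
    nth_rw 1 [hX', hY']
    exact add_sub_add_left_eq_sub _ _ _
  have vanishes := weightBounded_of_eq_add_transferOp ht (hX.sub hY) (d := 0)
    (fun κ => by simp) homogeneous
  ext κ
  simpa [sub_eq_zero] using vanishes κ

lemma IsGenusExpansion.unique (ht : t ∈ couplingBall v) {S S' : ℕ → List ℕ → ℂ}
    (hS : IsGenusExpansion t S) (hS' : IsGenusExpansion t S') : S = S' := by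
  ext1 g
  obtain ⟨M, hM⟩ := hS.bounded g
  obtain ⟨M', hM'⟩ := hS'.bounded g
  induction g generalizing M M' with
  | zero => exact eq_of_eq_add_transferOp ht hM hS.zero hM' hS'.zero
  | succ g ih =>
    obtain ⟨m, hm⟩ := hS.bounded g
    obtain ⟨m', hm'⟩ := hS'.bounded g
    have hsucc := hS'.succ g
    rw [← ih m hm m' hm'] at hsucc
    exact eq_of_eq_add_transferOp ht hM (hS.succ g) hM' hsucc

lemma IsGenusExpansion.conj {S : ℕ → List ℕ → ℂ} (hS : IsGenusExpansion t S) :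
    IsGenusExpansion (starRingEnd ℂ ∘ t) (fun g => starRingEnd ℂ ∘ S g) where
  bounded g := by
    obtain ⟨M, hM⟩ := hS.bounded g
    exact ⟨M, fun κ => by simpa using hM κ⟩
  zero := by
    rw [transferOp_comp_ringHom]
    nth_rw 1 [hS.zero]
    ext κ
    simp [Pi.single_apply, apply_ite]
  succ g := by
    rw [transferOp_comp_ringHom, mergeOp_comp_ringHom]
    nth_rw 1 [hS.succ]
    ext κ
    simp

end Stability

section Existence

variable (v : ℕ)

lemma exists_analyticAt_transferOp_resolvent (g : ℕ) :
    ∃ A : (Fin v → ℂ) → BoundedFunctions (List ℕ) →L[ℂ] BoundedFunctions (List ℕ),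
      ∀ t ∈ couplingBall v, AnalyticAt ℂ A t ∧
        ∀ Y, weightMul (wordWeight (radius g)) (A t Y) = weightMul (wordWeight (radius g)) Y +
          transferOp t (weightMul (wordWeight (radius g)) (A t Y)) := by
  set w := wordWeight (radius g)
  have hw : ∀ κ, 0 < w κ := wordWeight_pos (radius_pos g)
  have hr := sixteen_le_radius g
  obtain ⟨L₀, hL₀⟩ := exists_continuousLinearMap_weightMul_eq hw hw (splitOp ℂ)
    fun _ _ h => weightBounded_splitOp hr h
  choose L₁ hL₁ using fun j : Fin v => exists_continuousLinearMap_weightMul_eq hw hw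
    (potentialOp ℂ j) fun _ _ h => weightBounded_potentialOp (by linarith) j.2 h
  let L : (Fin v → ℂ) → _ := fun t => L₀ + ∑ j, t j • L₁ j
  have weightMul_L (t Y) : weightMul w (L t Y) = transferOp t (weightMul w Y) := by
    simp [L, transferOp, hL₀, hL₁]
  have norm_L_lt {t} (ht : t ∈ couplingBall v) : ‖L t‖ < 1 := by
    refine (ContinuousLinearMap.opNorm_le_bound _ (by norm_num : (0 : ℝ) ≤ 3 / 4)
      fun Y => norm_le_of_weightBounded_weightMul hw ?_).trans_lt (by norm_num)
    rw [weightMul_L]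
    exact weightBounded_transferOp hr (sum_norm_mul_le_of_mem_couplingBall ht g)
      (weightBounded_weightMul hw Y)
  have analyticAt_L (t) : AnalyticAt ℂ L t :=
    analyticAt_const.add <| Finset.analyticAt_fun_sum _ fun j _ =>
      ((ContinuousLinearMap.proj (R := ℂ) (φ := fun _ : Fin v => ℂ) j).analyticAt t).smul
        analyticAt_const
  refine ⟨fun t => Ring.inverse (1 - L t), fun t ht =>
    ⟨analyticAt_ringInverse_one_sub (analyticAt_L t) (norm_L_lt ht), fun Y => ?_⟩⟩
  rw [← weightMul_L, ← map_add]
  exact congrArg _ (ringInverse_one_sub_apply (norm_L_lt ht) Y)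

lemma weightBounded_single_nil {r : ℝ} (hr : 0 < r) :
    WeightBounded (wordWeight r) 1 (Pi.single [] 1 : List ℕ → ℂ) := fun κ => by
  rcases eq_or_ne κ [] with rfl | hκ
  · simp
  · simpa [hκ] using (wordWeight_pos hr κ).le

lemma exists_analyticAt_isGenusExpansion :
    ∃ S : (Fin v → ℂ) → ℕ → List ℕ → ℂ, ∀ t ∈ couplingBall v,
      IsGenusExpansion t (S t) ∧ ∀ g κ, AnalyticAt ℂ (fun t => S t g κ) t := by
  have hw (g : ℕ) : ∀ κ, 0 < wordWeight (radius g) κ := wordWeight_pos (radius_pos g)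
  choose A hA using exists_analyticAt_transferOp_resolvent v
  obtain ⟨Y₀, hY₀, -⟩ := (weightBounded_single_nil (radius_pos 0)).exists_weightMul_eq (hw 0)
  choose C hC using fun g => exists_weightBounded_mergeOp
    (by linarith [sixteen_le_radius g]) (radius_lt_radius_succ g)
  choose B hB using fun g =>
    exists_continuousLinearMap_weightMul_eq (hw g) (hw (g + 1)) (mergeOp ℂ) (hC g)
  let Y (t : Fin v → ℂ) (g : ℕ) : BoundedFunctions (List ℕ) :=
    Nat.rec (A 0 t Y₀) (fun g y => A (g + 1) t (B g y)) g
  have analyticAt_Y {t} (ht : t ∈ couplingBall v) (g : ℕ) : AnalyticAt ℂ (fun t => Y t g) t := by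
    induction g with
    | zero => exact analyticAt_clm_apply (hA 0 t ht).1 analyticAt_const
    | succ g ih =>
      exact analyticAt_clm_apply (hA (g + 1) t ht).1 (((B g).analyticAt _).fun_comp ih)
  refine ⟨fun t g => weightMul (wordWeight (radius g)) (Y t g), fun t ht => ⟨⟨?_, ?_, ?_⟩, ?_⟩⟩
  · exact fun g => ⟨_, weightBounded_weightMul (hw g) _⟩
  · rw [← hY₀]
    exact (hA 0 t ht).2 Y₀
  · intro g
    rw [← hB g]
    exact (hA (g + 1) t ht).2 _
  · intro g κ
    have evaluation := (lp.evalCLM ℂ (fun _ : List ℕ => ℂ) κ (p := ⊤)).analyticAt (Y t g)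
    exact analyticAt_const.mul
      (AnalyticAt.fun_comp (f := fun t => Y t g) evaluation (analyticAt_Y ht g))

end Existence

/-- The coefficient of `N^(-2g)` in the large `N` expansion of the normalized correlator of the
power sums in the word `κ`, as a function of complex couplings. Its value is meaningful on
`couplingBall v` only. -/
def genusCorrelator {v : ℕ} (t : Fin v → ℂ) (g : ℕ) (κ : List ℕ) : ℂ :=
  (exists_analyticAt_isGenusExpansion v).choose t g κ

section GenusCorrelator

variable {v : ℕ} {t : Fin v → ℂ}

lemma isGenusExpansion_genusCorrelator (ht : t ∈ couplingBall v) :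
    IsGenusExpansion t (genusCorrelator t) :=
  ((exists_analyticAt_isGenusExpansion v).choose_spec t ht).1

lemma analyticAt_genusCorrelator (ht : t ∈ couplingBall v) (g : ℕ) (κ : List ℕ) :
    AnalyticAt ℂ (fun t : Fin v → ℂ => genusCorrelator t g κ) t :=
  ((exists_analyticAt_isGenusExpansion v).choose_spec t ht).2 g κ

lemma conj_genusCorrelator_ofReal {s : Fin v → ℝ} (hs : Complex.ofReal ∘ s ∈ couplingBall v)
    (g : ℕ) (κ : List ℕ) :
    starRingEnd ℂ (genusCorrelator (Complex.ofReal ∘ s) g κ) =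
      genusCorrelator (Complex.ofReal ∘ s) g κ := by
  have h := isGenusExpansion_genusCorrelator hs
  have h_conj := h.conj
  have conj_couplings : starRingEnd ℂ ∘ Complex.ofReal ∘ s = Complex.ofReal ∘ s := by
    ext j; simp
  rw [conj_couplings] at h_conj
  exact congrFun (congrFun (h_conj.unique hs h) g) κ

end GenusCorrelator

/-! ### Comparison of a distant eigenvalue with one in the unit interval -/

section Jensen

lemma neg_one_le_mul_log {u : ℝ} (hu : -1 ≤ u) : -1 ≤ u * Real.log u := by
  rcases lt_or_ge 0 u with hpos | hneg
  · calc -1 ≤ u * (1 - u⁻¹) := by rw [mul_sub, mul_inv_cancel₀ hpos.ne']; linarith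
      _ ≤ u * Real.log u :=
        mul_le_mul_of_nonneg_left (Real.one_sub_inv_le_log_of_pos hpos) hpos.le
  · have : Real.log u ≤ 0 := by
      rw [← Real.log_abs]
      exact Real.log_nonpos (abs_nonneg _) (abs_le.mpr ⟨hu, by linarith⟩)
    nlinarith

lemma log_one_add_sq_le (y : ℝ) :
    Real.log (1 + y ^ 2) - 6 ≤ 2 * ((1 - y) * Real.log (1 - y) + y * Real.log y) := by
  have log_two := Real.log_two_lt_d9
  rcases le_or_gt 2 y with hy | hy
  · have shift : Real.log (1 - y) ≤ Real.log y := by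
      rw [← Real.log_neg_eq_log, neg_sub]
      exact Real.log_le_log (by linarith) (by linarith)
    have quadratic : Real.log (1 + y ^ 2) ≤ 2 * Real.log y + Real.log 2 := by
      have := Real.log_le_log (by positivity) (by nlinarith : 1 + y ^ 2 ≤ y ^ 2 * 2)
      rwa [Real.log_mul (by positivity) (by norm_num), Real.log_pow] at this
    nlinarith
  rcases le_or_gt y (-1) with hy' | hy'
  · have shift : Real.log y ≤ Real.log (1 - y) := by
      rw [← Real.log_neg_eq_log]
      exact Real.log_le_log (by linarith) (by linarith)
    have quadratic : Real.log (1 + y ^ 2) ≤ 2 * Real.log (1 - y) := by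
      have := Real.log_le_log (by positivity) (by nlinarith : 1 + y ^ 2 ≤ (1 - y) ^ 2)
      rwa [Real.log_pow] at this
    nlinarith
  · have bounded : 2 * Real.log (1 + y ^ 2) ≤ 5 * Real.log 2 := by
      have : (1 + y ^ 2) ^ 2 ≤ 2 ^ 5 := by nlinarith [sq_nonneg y, (by nlinarith : y ^ 2 ≤ 4)]
      have := Real.log_le_log (by positivity) this
      rwa [Real.log_pow, Real.log_pow] at this
    linarith [neg_one_le_mul_log hy'.le, neg_one_le_mul_log (by linarith : -1 ≤ 1 - y)]

lemma intervalIntegrable_log_sub (y : ℝ) :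
    IntervalIntegrable (fun s => Real.log (s - y)) volume 0 1 := by
  simpa using
    (intervalIntegral.intervalIntegrable_log' (a := 0 - y) (b := 1 - y)).comp_sub_right y

lemma integral_log_sub (y : ℝ) :
    ∫ s in (0 : ℝ)..1, Real.log (s - y) =
      (1 - y) * Real.log (1 - y) + y * Real.log y - 1 := by
  rw [intervalIntegral.integral_comp_sub_right Real.log y, integral_log, zero_sub,
    Real.log_neg_eq_log]
  ring

lemma exp_integral_le_integral_exp {f : ℝ → ℝ} (hf : IntervalIntegrable f volume 0 1)
    (hexp : IntervalIntegrable (fun s => Real.exp (f s)) volume 0 1) :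
    Real.exp (∫ s in (0 : ℝ)..1, f s) ≤ ∫ s in (0 : ℝ)..1, Real.exp (f s) := by
  have : IsProbabilityMeasure (volume.restrict (Set.Ioc (0 : ℝ) 1)) := ⟨by simp⟩
  rw [intervalIntegrable_iff_integrableOn_Ioc_of_le zero_le_one] at hf hexp
  rw [intervalIntegral.integral_of_le zero_le_one, intervalIntegral.integral_of_le zero_le_one]
  exact convexOn_exp.map_integral_le Real.continuous_exp.continuousOn isClosed_univ
    (by simp) hf hexp

lemma prod_one_add_sq_le_integral {n : ℕ} (y : Fin n → ℝ) :
    ∏ j, (1 + y j ^ 2) ≤ Real.exp (8 * n) * ∫ s in (0 : ℝ)..1, ∏ j, (s - y j) ^ 2 := by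
  let f (s : ℝ) : ℝ := ∑ j, 2 * Real.log (s - y j)
  have integrable_f : IntervalIntegrable f volume 0 1 := by
    simpa [f, Finset.sum_fn] using IntervalIntegrable.sum (μ := volume) (a := 0) (b := 1) univ
      (f := fun (j : Fin n) s => 2 * Real.log (s - y j))
      fun j _ => (intervalIntegrable_log_sub (y j)).const_mul 2
  have exp_f : (fun s => ∏ j, (s - y j) ^ 2) =ᵐ[volume] fun s => Real.exp (f s) := by
    filter_upwards [measure_eq_zero_iff_ae_notMem.mp ((Set.finite_range y).measure_zero volume)]
      with s hs
    rw [Real.exp_sum]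
    refine prod_congr rfl fun j _ => ?_
    have : s - y j ≠ 0 := fun h => hs ⟨j, by linarith⟩
    rw [← Real.exp_log (by positivity : 0 < (s - y j) ^ 2), Real.log_pow]
    norm_num
  have integrable_exp_f : IntervalIntegrable (fun s => Real.exp (f s)) volume 0 1 :=
    (by fun_prop : Continuous fun s => ∏ j, (s - y j) ^ 2).intervalIntegrable 0 1 |>.congr_ae
      (ae_restrict_of_ae exp_f)
  have integral_f : ∑ j, (Real.log (1 + y j ^ 2) - 8) ≤ ∫ s in (0 : ℝ)..1, f s := by
    rw [intervalIntegral.integral_finsetSum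
      fun j _ => (intervalIntegrable_log_sub (y j)).const_mul 2]
    refine sum_le_sum fun j _ => ?_
    rw [intervalIntegral.integral_const_mul, integral_log_sub]
    linarith [log_one_add_sq_le (y j)]
  calc ∏ j, (1 + y j ^ 2)
      = Real.exp (8 * n) * Real.exp (∑ j, (Real.log (1 + y j ^ 2) - 8)) := by
        rw [← Real.exp_add, sum_sub_distrib, sum_const, card_univ, Fintype.card_fin, nsmul_eq_mul,
          mul_comm, sub_eq_add_neg, add_comm, neg_add_cancel_right, Real.exp_sum]
        exact prod_congr rfl fun j _ => (Real.exp_log (by positivity)).symm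
    _ ≤ Real.exp (8 * n) * ∫ s in (0 : ℝ)..1, Real.exp (f s) := by
        gcongr
        exact (Real.exp_le_exp.mpr integral_f).trans
          (exp_integral_le_integral_exp integrable_f integrable_exp_f)
    _ = Real.exp (8 * n) * ∫ s in (0 : ℝ)..1, ∏ j, (s - y j) ^ 2 := by
        rw [intervalIntegral.integral_congr_ae (exp_f.mono fun _ h _ => h)]

end Jensen

/-- Couplings whose external field is convenient for confinement: they only raise the potential
outside the unit interval, and are small inside it. -/
structure Admissible (v : ℕ) (t : ℕ → ℝ) : Prop where
  nonneg : ∀ x : ℝ, 1 ≤ |x| → 0 ≤ ∑ j ∈ Icc 1 v, t j * x ^ j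
  sum_abs_le : ∑ j ∈ Icc 1 v, |t j| ≤ 1 / 2

lemma continuous_Vt (v : ℕ) (t : ℕ → ℝ) : Continuous (Vt v t) := by
  unfold Vt; fun_prop

namespace Admissible

variable {v : ℕ} {t : ℕ → ℝ}

lemma zero (v : ℕ) : Admissible v 0 := ⟨by simp, by simp⟩

lemma smul (h : Admissible v t) {τ : ℝ} (hτ : τ ∈ Set.Icc (0 : ℝ) 1) : Admissible v (τ • t) where
  nonneg x hx := by
    simpa only [Pi.smul_apply, smul_eq_mul, mul_assoc, ← mul_sum] using
      mul_nonneg hτ.1 (h.nonneg x hx)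
  sum_abs_le := by
    simp only [Pi.smul_apply, smul_eq_mul, abs_mul, ← mul_sum, abs_of_nonneg hτ.1]
    exact (mul_le_of_le_one_left (sum_nonneg fun _ _ => abs_nonneg _) hτ.2).trans h.sum_abs_le

lemma abs_sum_le (h : Admissible v t) {x : ℝ} (hx : |x| ≤ 1) :
    |∑ j ∈ Icc 1 v, t j * x ^ j| ≤ 1 / 2 := by
  refine (abs_sum_le_sum_abs _ _).trans ((sum_le_sum fun j _ => ?_).trans h.sum_abs_le)
  rw [abs_mul, abs_pow]
  exact mul_le_of_le_one_right (abs_nonneg _) (pow_le_one₀ (abs_nonneg _) hx)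

lemma half_sq_le_Vt (h : Admissible v t) {x : ℝ} (hx : 1 ≤ |x|) : x ^ 2 / 2 ≤ Vt v t x := by
  rw [Vt]
  linarith [h.nonneg x hx]

lemma half_sq_sub_le_Vt (h : Admissible v t) (x : ℝ) : x ^ 2 / 2 - 1 / 2 ≤ Vt v t x := by
  rcases le_total 1 |x| with hx | hx
  · linarith [h.half_sq_le_Vt hx]
  · rw [Vt]
    linarith [(abs_le.mp (h.abs_sum_le hx)).1]

lemma Vt_le_one (h : Admissible v t) {x : ℝ} (hx : x ∈ Set.Icc (0 : ℝ) 1) : Vt v t x ≤ 1 := by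
  rw [Vt]
  nlinarith [(abs_le.mp (h.abs_sum_le (abs_le.mpr ⟨by linarith [hx.1], hx.2⟩))).2, hx.1, hx.2]

end Admissible

lemma one_add_sq_mul_exp_le {x : ℝ} (hx : 16 ≤ |x|) :
    (1 + x ^ 2) * Real.exp 9 ≤ Real.exp (x ^ 2 / 4) := by
  have hx2 : 256 ≤ x ^ 2 := by rw [← sq_abs]; nlinarith
  have eight_le : (8 : ℝ) ≤ Real.exp 3 := by
    rw [show (3 : ℝ) = (3 : ℕ) * 1 by norm_num, Real.exp_nat_mul]
    calc (8 : ℝ) = 2 ^ 3 := by norm_num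
      _ ≤ Real.exp 1 ^ 3 := by gcongr; linarith [Real.add_one_le_exp (1 : ℝ)]
  have linear_le : (1 + x ^ 2) / 8 ≤ Real.exp ((1 + x ^ 2) / 8 - 1) := by
    linarith [Real.add_one_le_exp ((1 + x ^ 2) / 8 - 1)]
  calc (1 + x ^ 2) * Real.exp 9 = 8 * ((1 + x ^ 2) / 8) * Real.exp 9 := by ring
    _ ≤ Real.exp 3 * Real.exp ((1 + x ^ 2) / 8 - 1) * Real.exp 9 := by gcongr
    _ = Real.exp (3 + ((1 + x ^ 2) / 8 - 1) + 9) := by rw [Real.exp_add, Real.exp_add]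
    _ ≤ Real.exp (x ^ 2 / 4) := Real.exp_le_exp.mpr (by linarith)

lemma prod_sub_sq_le {n : ℕ} (x : ℝ) (y : Fin n → ℝ) :
    ∏ j, (x - y j) ^ 2 ≤
      (1 + x ^ 2) ^ n * Real.exp (8 * n) * ∫ s in (0 : ℝ)..1, ∏ j, (s - y j) ^ 2 := by
  have factorwise (j : Fin n) : (x - y j) ^ 2 ≤ (1 + x ^ 2) * (1 + y j ^ 2) := by
    nlinarith [sq_nonneg (1 + x * y j)]
  calc ∏ j, (x - y j) ^ 2
      ≤ ∏ j, ((1 + x ^ 2) * (1 + y j ^ 2)) :=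
        prod_le_prod (fun _ _ => sq_nonneg _) fun j _ => factorwise j
    _ = (1 + x ^ 2) ^ n * ∏ j, (1 + y j ^ 2) := by simp [prod_mul_distrib]
    _ ≤ _ := by
        rw [mul_assoc]
        exact mul_le_mul_of_nonneg_left (prod_one_add_sq_le_integral y) (by positivity)

namespace Admissible

variable {v n : ℕ} {t : ℕ → ℝ}

lemma exp_neg_mul_integral_prod_le (h : Admissible v t) (y : Fin n → ℝ) {c : ℝ} (hc : 0 ≤ c) :
    Real.exp (-c) * ∫ s in (0 : ℝ)..1, ∏ j, (s - y j) ^ 2 ≤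
      ∫ s in (0 : ℝ)..1, Real.exp (-c * Vt v t s) * ∏ j, (s - y j) ^ 2 := by
  have := continuous_Vt v t
  rw [← intervalIntegral.integral_const_mul]
  refine intervalIntegral.integral_mono_on zero_le_one
    (Continuous.intervalIntegrable (by fun_prop) _ _)
    (Continuous.intervalIntegrable (by fun_prop) _ _) fun s hs => ?_
  refine mul_le_mul_of_nonneg_right (Real.exp_le_exp.mpr ?_) (prod_nonneg fun _ _ => sq_nonneg _)
  nlinarith [h.Vt_le_one hs]

lemma exp_mul_prod_sub_sq_le (h : Admissible v t) {x : ℝ} (hx : 16 ≤ |x|) (y : Fin n → ℝ) :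
    Real.exp (-((n + 1 : ℕ) : ℝ) * Vt v t x) * ∏ j, (x - y j) ^ 2 ≤
      Real.exp (-((n + 1 : ℕ) : ℝ) * (x ^ 2 / 4)) *
        ∫ s in (0 : ℝ)..1, Real.exp (-((n + 1 : ℕ) : ℝ) * Vt v t s) * ∏ j, (s - y j) ^ 2 := by
  set N : ℝ := ((n + 1 : ℕ) : ℝ) with hN
  have hN0 : 0 ≤ N := by positivity
  set I := ∫ s in (0 : ℝ)..1, ∏ j, (s - y j) ^ 2
  have hI0 : 0 ≤ I := intervalIntegral.integral_nonneg zero_le_one fun s _ =>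
    prod_nonneg fun j _ => sq_nonneg _
  have potential_le : Real.exp (-N * Vt v t x) ≤ Real.exp (-N * (x ^ 2 / 2)) :=
    Real.exp_le_exp.mpr (by nlinarith [h.half_sq_le_Vt (by linarith : 1 ≤ |x|)])
  have growth_le : (1 + x ^ 2) ^ n * Real.exp (8 * n) * Real.exp N ≤
      Real.exp (N * (x ^ 2 / 4)) := by
    rw [hN, Real.exp_nat_mul, mul_assoc, ← Real.exp_add]
    calc (1 + x ^ 2) ^ n * Real.exp (8 * n + (n + 1 : ℕ))
        ≤ (1 + x ^ 2) ^ (n + 1) * Real.exp ((n + 1 : ℕ) * 9) := by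
          gcongr
          · nlinarith [sq_nonneg x]
          · omega
          · push_cast; linarith
      _ = ((1 + x ^ 2) * Real.exp 9) ^ (n + 1) := by rw [Real.exp_nat_mul, mul_pow]
      _ ≤ _ := by gcongr; exact one_add_sq_mul_exp_le hx
  calc Real.exp (-N * Vt v t x) * ∏ j, (x - y j) ^ 2
      ≤ Real.exp (-N * (x ^ 2 / 2)) * ((1 + x ^ 2) ^ n * Real.exp (8 * n) * I) :=
        mul_le_mul potential_le (prod_sub_sq_le x y) (prod_nonneg fun j _ => sq_nonneg _)
          (Real.exp_pos _).le
    _ = Real.exp (-N * (x ^ 2 / 2)) * ((1 + x ^ 2) ^ n * Real.exp (8 * n) * Real.exp N) *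
          (Real.exp (-N) * I) := by
        rw [Real.exp_neg N]; field_simp
    _ ≤ Real.exp (-N * (x ^ 2 / 2)) * Real.exp (N * (x ^ 2 / 4)) * (Real.exp (-N) * I) := by
        gcongr
    _ = Real.exp (-N * (x ^ 2 / 4)) * (Real.exp (-N) * I) := by
        rw [← Real.exp_add]; congr 2; ring
    _ ≤ _ := mul_le_mul_of_nonneg_left (h.exp_neg_mul_integral_prod_le y hN0) (Real.exp_pos _).le

end Admissible

/-! ### Confinement to a box -/

lemma prod_filter_lt_succAbove {M : Type*} [CommMonoid M] {n : ℕ} (i : Fin (n + 1))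
    (f : Fin (n + 1) → Fin (n + 1) → M) (hf : ∀ p q, f p q = f q p) :
    ∏ p : Fin (n + 1) × Fin (n + 1) with p.1 < p.2, f p.1 p.2 =
      (∏ j, f i (i.succAbove j)) *
        ∏ p : Fin n × Fin n with p.1 < p.2, f (i.succAbove p.1) (i.succAbove p.2) := by
  have split_row (p : Fin n) :
      (∏ q, if i.succAbove p < q then f (i.succAbove p) q else 1) =
        (if i.succAbove p < i then f i (i.succAbove p) else 1) *
          ∏ q : Fin n, if p < q then f (i.succAbove p) (i.succAbove q) else 1 := by
    simp [Fin.prod_univ_succAbove _ i, hf (i.succAbove p) i]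
  simp only [prod_filter, Fintype.prod_prod_type]
  rw [Fin.prod_univ_succAbove _ i, Fin.prod_univ_succAbove _ i]
  simp only [split_row, prod_mul_distrib, lt_irrefl, if_false, one_mul, ← mul_assoc]
  rw [← prod_mul_distrib]
  congr 1
  refine prod_congr rfl fun j _ => ?_
  rcases lt_or_gt_of_ne (Fin.succAbove_ne i j) with h | h <;> simp [h, h.not_gt]

lemma dens_nonneg (v N : ℕ) (t : ℕ → ℝ) (x : Fin N → ℝ) : 0 ≤ dens v N t x :=
  mul_nonneg (prod_nonneg fun _ _ => sq_nonneg _) (Real.exp_pos _).le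

lemma continuous_dens (v N : ℕ) (t : ℕ → ℝ) : Continuous (dens v N t) := by
  have := continuous_Vt v t
  unfold dens; fun_prop

lemma exists_dens_insertNth_eq (v : ℕ) {n : ℕ} (t : ℕ → ℝ) (i : Fin (n + 1)) (y : Fin n → ℝ) :
    ∃ c : ℝ, 0 ≤ c ∧ ∀ x, dens v (n + 1) t (i.insertNth x y) =
      Real.exp (-((n + 1 : ℕ) : ℝ) * Vt v t x) * (∏ j, (x - y j) ^ 2) * c := by
  refine ⟨(∏ p : Fin n × Fin n with p.1 < p.2, (y p.1 - y p.2) ^ 2) *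
    Real.exp (-((n + 1 : ℕ) : ℝ) * ∑ j, Vt v t (y j)),
    mul_nonneg (prod_nonneg fun _ _ => sq_nonneg _) (Real.exp_pos _).le, fun x => ?_⟩
  rw [dens, prod_filter_lt_succAbove i (fun p q => ((i.insertNth x y : Fin (n + 1) → ℝ) p -
    (i.insertNth x y : Fin (n + 1) → ℝ) q) ^ 2) (fun p q => by ring), Fin.sum_univ_succAbove _ i]
  simp only [Fin.insertNth_apply_same, Fin.insertNth_apply_succAbove]
  rw [mul_add, Real.exp_add]
  ring

lemma lintegral_eq_lintegral_insertNth {α : Type*} [MeasureSpace α]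
    [SigmaFinite (volume : Measure α)] {n : ℕ} (i : Fin (n + 1))
    {f : (Fin (n + 1) → α) → ENNReal} (hf : Measurable f) :
    ∫⁻ x, f x = ∫⁻ y : Fin n → α, ∫⁻ s : α, f (i.insertNth s y) := by
  rw [← (volume_preserving_piFinSuccAbove (fun _ => α) i).symm.lintegral_comp_emb
    (MeasurableEquiv.measurableEmbedding _) f]
  exact lintegral_prod_symm _ (hf.comp (MeasurableEquiv.measurable _)).aemeasurable

lemma Admissible.ofReal_dens_insertNth_le {v n : ℕ} {t : ℕ → ℝ} (h : Admissible v t)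
    (i : Fin (n + 1)) {x : ℝ} (hx : 16 ≤ |x|) (y : Fin n → ℝ) :
    ENNReal.ofReal (dens v (n + 1) t (i.insertNth x y)) ≤
      ENNReal.ofReal (Real.exp (-((n + 1 : ℕ) : ℝ) * (x ^ 2 / 4))) *
        ∫⁻ s in Set.Icc (0 : ℝ) 1, ENNReal.ofReal (dens v (n + 1) t (i.insertNth s y)) := by
  have continuous_slice : Continuous fun s : ℝ => dens v (n + 1) t (i.insertNth s y) :=
    (continuous_dens v (n + 1) t).comp (Continuous.finInsertNth i continuous_id continuous_const)
  obtain ⟨c, hc, dens_eq⟩ := exists_dens_insertNth_eq v t i y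
  rw [← ofReal_integral_eq_lintegral_ofReal continuous_slice.integrableOn_Icc
    (.of_forall fun s => dens_nonneg _ _ _ _), ← ENNReal.ofReal_mul (Real.exp_pos _).le,
    integral_Icc_eq_integral_Ioc, ← intervalIntegral.integral_of_le zero_le_one]
  simp only [dens_eq]
  rw [intervalIntegral.integral_mul_const, ← mul_assoc]
  exact ENNReal.ofReal_le_ofReal
    (mul_le_mul_of_nonneg_right (h.exp_mul_prod_sub_sq_le hx y) hc)

lemma integrable_one_add_sq_pow_mul_exp_neg_mul_sq (m : ℕ) {b : ℝ} (hb : 0 < b) :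
    Integrable fun x : ℝ => (1 + x ^ 2) ^ m * Real.exp (-b * x ^ 2) := by
  refine ((integrable_exp_neg_mul_sq (half_pos hb)).const_mul
    (((b / 2) ^ m)⁻¹ * m.factorial * Real.exp (b / 2))).mono'
    (Continuous.aestronglyMeasurable (by fun_prop)) (.of_forall fun x => ?_)
  have pow_le : (1 + x ^ 2) ^ m ≤
      ((b / 2) ^ m)⁻¹ * (Real.exp (b / 2 * (1 + x ^ 2)) * m.factorial) := by
    have := Real.pow_div_factorial_le_exp (b / 2 * (1 + x ^ 2)) (by positivity) m
    rw [div_le_iff₀ (by positivity), mul_pow] at this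
    rwa [← div_eq_inv_mul, le_div_iff₀' (by positivity)]
  rw [Real.norm_of_nonneg (by positivity)]
  calc (1 + x ^ 2) ^ m * Real.exp (-b * x ^ 2)
      ≤ ((b / 2) ^ m)⁻¹ * (Real.exp (b / 2 * (1 + x ^ 2)) * m.factorial) *
          Real.exp (-b * x ^ 2) := by gcongr
    _ = ((b / 2) ^ m)⁻¹ * m.factorial * (Real.exp (b / 2 * (1 + x ^ 2)) *
          Real.exp (-b * x ^ 2)) := by ring
    _ = ((b / 2) ^ m)⁻¹ * m.factorial * (Real.exp (b / 2) * Real.exp (-(b / 2) * x ^ 2)) := by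
        rw [← Real.exp_add, ← Real.exp_add]; congr 2; ring
    _ = _ := by ring

lemma prod_filter_lt_sub_sq_le {N : ℕ} (x : Fin N → ℝ) :
    ∏ p : Fin N × Fin N with p.1 < p.2, (x p.1 - x p.2) ^ 2 ≤ ∏ i, (1 + x i ^ 2) ^ (2 * N) :=
  calc ∏ p : Fin N × Fin N with p.1 < p.2, (x p.1 - x p.2) ^ 2
      ≤ ∏ p : Fin N × Fin N with p.1 < p.2, ((1 + x p.1 ^ 2) * (1 + x p.2 ^ 2)) :=
        prod_le_prod (fun _ _ => sq_nonneg _) fun p _ => by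
          nlinarith [sq_nonneg (1 + x p.1 * x p.2)]
    _ ≤ ∏ p : Fin N × Fin N, ((1 + x p.1 ^ 2) * (1 + x p.2 ^ 2)) :=
        prod_le_prod_of_subset_of_one_le (filter_subset _ _)
          (fun _ _ => by positivity) fun p _ _ => by
          nlinarith [sq_nonneg (x p.1), sq_nonneg (x p.2), sq_nonneg (x p.1 * x p.2)]
    _ = ∏ i, (1 + x i ^ 2) ^ (2 * N) := by
        simp [Fintype.prod_prod_type, prod_mul_distrib, two_mul, pow_add, prod_pow]

lemma Admissible.integrable_dens {v N : ℕ} {t : ℕ → ℝ} (h : Admissible v t) (hN : 1 ≤ N) :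
    Integrable (dens v N t) := by
  have integrable_majorant : Integrable fun x : Fin N → ℝ =>
      ∏ i, Real.exp (N / 2) * ((1 + x i ^ 2) ^ (2 * N) * Real.exp (-(N / 2 : ℝ) * x i ^ 2)) :=
    Integrable.fintype_prod (μ := fun _ => volume) fun _ =>
      (integrable_one_add_sq_pow_mul_exp_neg_mul_sq (2 * N) (by positivity)).const_mul _
  refine integrable_majorant.mono' (continuous_dens v N t).aestronglyMeasurable
    (.of_forall fun x => ?_)
  have exp_le : Real.exp (-(N : ℝ) * ∑ i, Vt v t (x i)) ≤
      ∏ i, (Real.exp (N / 2) * Real.exp (-(N / 2 : ℝ) * x i ^ 2)) := by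
    rw [mul_sum, Real.exp_sum]
    refine prod_le_prod (fun i _ => (Real.exp_pos _).le) fun i _ => ?_
    rw [← Real.exp_add]
    refine Real.exp_le_exp.mpr ?_
    nlinarith [h.half_sq_sub_le_Vt (x i), (Nat.cast_nonneg N : (0 : ℝ) ≤ N)]
  rw [Real.norm_of_nonneg (dens_nonneg _ _ _ _)]
  calc dens v N t x
      ≤ (∏ i, (1 + x i ^ 2) ^ (2 * N)) *
          ∏ i, (Real.exp (N / 2) * Real.exp (-(N / 2 : ℝ) * x i ^ 2)) :=
        mul_le_mul (prod_filter_lt_sub_sq_le x) exp_le (Real.exp_pos _).le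
          (prod_nonneg fun i _ => by positivity)
    _ = _ := by
        rw [← prod_mul_distrib]
        exact prod_congr rfl fun i _ => by ring

lemma lintegral_const_mul_gaussian_le {c : ℝ} (hc : 0 ≤ c) :
    ∫⁻ s : ℝ, ENNReal.ofReal (c * Real.exp (-(1 / 8) * s ^ 2)) ≤ ENNReal.ofReal (6 * c) := by
  have : √(Real.pi / (1 / 8)) ≤ 6 := by
    rw [Real.sqrt_le_left (by norm_num)]
    linarith [Real.pi_lt_four]
  rw [← ofReal_integral_eq_lintegral_ofReal ((integrable_exp_neg_mul_sq (by norm_num)).const_mul c)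
    (.of_forall fun s => by positivity), integral_const_mul, integral_gaussian, mul_comm]
  gcongr

/-- The cube `[-16, 16]^N` to which the eigenvalues are confined; on its boundary and outside it
the density is exponentially small. -/
def box (N : ℕ) : Set (Fin N → ℝ) := Set.Icc (fun _ => -16) (fun _ => 16)

/-- The partition function of the eigenvalues confined to `box N`. -/
def boxZ (v N : ℕ) (t : ℕ → ℝ) : ℝ := ∫ x in box N, dens v N t x

lemma mem_box {N : ℕ} {x : Fin N → ℝ} : x ∈ box N ↔ ∀ i, |x i| ≤ 16 := by
  simp only [box, Set.mem_Icc, Pi.le_def, abs_le, forall_and]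

lemma measurableSet_box (N : ℕ) : MeasurableSet (box N) := measurableSet_Icc

lemma isCompact_box (N : ℕ) : IsCompact (box N) := isCompact_Icc

lemma insertNth_mem_box {n : ℕ} {i : Fin (n + 1)} {x : ℝ} {y : Fin n → ℝ} :
    i.insertNth x y ∈ box (n + 1) ↔ |x| ≤ 16 ∧ y ∈ box n := by
  simp only [mem_box, Fin.forall_iff_succAbove i, Fin.insertNth_apply_same,
    Fin.insertNth_apply_succAbove]

lemma integrableOn_box {N : ℕ} {f : (Fin N → ℝ) → ℝ} (hf : Continuous f) :
    IntegrableOn f (box N) :=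
  hf.continuousOn.integrableOn_compact (isCompact_box N)

lemma boxZ_pos (v N : ℕ) (t : ℕ → ℝ) : 0 < boxZ v N t := by
  rw [boxZ, setIntegral_pos_iff_support_of_nonneg_ae (.of_forall fun x => dens_nonneg _ _ _ _)
    (integrableOn_box (continuous_dens v N t))]
  have isOpen_inner : IsOpen (Function.support (dens v N t) ∩ {x | ∀ i, |x i| < 16}) := by
    refine (continuous_dens v N t).isOpen_support.inter ?_
    rw [Set.ofPred_forall]
    exact isOpen_iInter_of_finite fun i => isOpen_lt (by fun_prop) continuous_const
  have inner_nonempty : (Function.support (dens v N t) ∩ {x | ∀ i, |x i| < 16}).Nonempty := by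
    refine ⟨fun i => (i : ℝ) / N, ?_, fun i => ?_⟩
    · refine mul_ne_zero (prod_ne_zero_iff.mpr fun p hp => pow_ne_zero _ (sub_ne_zero.mpr ?_))
        (Real.exp_ne_zero _)
      have hN : (0 : ℝ) < N := by exact_mod_cast p.1.pos
      have : (p.1 : ℝ) < p.2 := by exact_mod_cast (mem_filter.mp hp).2
      exact (div_lt_div_of_pos_right this hN).ne
    · have hN : (0 : ℝ) < N := by exact_mod_cast i.pos
      have : (i : ℝ) < N := by exact_mod_cast i.2
      rw [abs_of_nonneg (by positivity), div_lt_iff₀ hN]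
      linarith
  refine (isOpen_inner.measure_pos volume inner_nonempty).trans_le (measure_mono ?_)
  exact Set.inter_subset_inter_right _ fun x hx => mem_box.mpr fun i => (hx i).le

namespace Admissible

variable {v n N : ℕ} {t : ℕ → ℝ}

lemma setIntegral_box_dens_insertNth_le (h : Admissible v t) (i : Fin (n + 1)) {x : ℝ}
    (hx : |x| = 16) :
    ∫ y in box n, dens v (n + 1) t (i.insertNth x y) ≤
      Real.exp (-64 * ((n + 1 : ℕ) : ℝ)) * boxZ v (n + 1) t := by
  have continuous_slice : Continuous fun y : Fin n → ℝ => dens v (n + 1) t (i.insertNth x y) :=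
    (continuous_dens v (n + 1) t).comp (Continuous.finInsertNth i continuous_const continuous_id)
  have measurable_dens : Measurable fun z => ENNReal.ofReal (dens v (n + 1) t z) :=
    (continuous_dens v (n + 1) t).measurable.ennreal_ofReal
  rw [← ENNReal.ofReal_le_ofReal_iff (mul_nonneg (Real.exp_pos _).le (boxZ_pos v _ t).le),
    ENNReal.ofReal_mul (Real.exp_pos _).le, boxZ,
    ofReal_integral_eq_lintegral_ofReal (integrableOn_box continuous_slice)
      (.of_forall fun s => dens_nonneg _ _ _ _),
    ofReal_integral_eq_lintegral_ofReal (integrableOn_box (continuous_dens v _ t))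
      (.of_forall fun s => dens_nonneg _ _ _ _), ← lintegral_indicator (measurableSet_box _),
    ← lintegral_indicator (measurableSet_box _),
    lintegral_eq_lintegral_insertNth i (measurable_dens.indicator (measurableSet_box _)),
    ← lintegral_const_mul' _ _ ENNReal.ofReal_ne_top]
  refine lintegral_mono fun y => Set.indicator_apply_le' (fun hy => ?_) fun _ => zero_le
  refine (h.ofReal_dens_insertNth_le i hx.ge y).trans ?_
  rw [← sq_abs, hx, show -((n + 1 : ℕ) : ℝ) * (16 ^ 2 / 4) = -64 * ((n + 1 : ℕ) : ℝ) by ring,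
    ← lintegral_indicator measurableSet_Icc]
  gcongr with s
  refine Set.indicator_apply_le' (fun hs => ?_) fun _ => zero_le
  rw [Set.indicator_of_mem (insertNth_mem_box.mpr ⟨?_, hy⟩)]
  rw [abs_of_nonneg hs.1]
  linarith [hs.2]

lemma setLIntegral_dens_tail_le (h : Admissible v t) (i : Fin N) :
    ∫⁻ x in {x : Fin N → ℝ | 16 < |x i|}, ENNReal.ofReal (dens v N t x) ≤
      ENNReal.ofReal (6 * Real.exp (-32 * N)) * ∫⁻ x, ENNReal.ofReal (dens v N t x) := by
  obtain ⟨n, rfl⟩ : ∃ n, N = n + 1 := ⟨N - 1, by have := i.pos; omega⟩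
  have measurableSet_tail : MeasurableSet {x : Fin (n + 1) → ℝ | 16 < |x i|} :=
    measurableSet_lt measurable_const (by fun_prop)
  have measurable_dens : Measurable fun z => ENNReal.ofReal (dens v (n + 1) t z) :=
    (continuous_dens v (n + 1) t).measurable.ennreal_ofReal
  have exp_le {s : ℝ} (hs : 16 < |s|) : Real.exp (-((n + 1 : ℕ) : ℝ) * (s ^ 2 / 4)) ≤
      Real.exp (-32 * ((n + 1 : ℕ) : ℝ)) * Real.exp (-(1 / 8) * s ^ 2) := by
    have : 256 ≤ s ^ 2 := by rw [← sq_abs]; nlinarith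
    rw [← Real.exp_add]
    refine Real.exp_le_exp.mpr ?_
    push_cast
    nlinarith [(Nat.cast_nonneg n : (0 : ℝ) ≤ n)]
  rw [← lintegral_indicator measurableSet_tail,
    lintegral_eq_lintegral_insertNth i (measurable_dens.indicator measurableSet_tail),
    lintegral_eq_lintegral_insertNth i measurable_dens,
    ← lintegral_const_mul' _ _ ENNReal.ofReal_ne_top]
  refine lintegral_mono fun y => ?_
  calc _ ≤ ∫⁻ s : ℝ, ENNReal.ofReal (Real.exp (-32 * ((n + 1 : ℕ) : ℝ)) *
          Real.exp (-(1 / 8) * s ^ 2)) *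
        ∫⁻ s, ENNReal.ofReal (dens v (n + 1) t (i.insertNth s y)) := by
        refine lintegral_mono fun s => Set.indicator_apply_le' (fun hs => ?_) fun _ => zero_le
        replace hs : 16 < |s| := by simpa using hs
        exact (h.ofReal_dens_insertNth_le i hs.le y).trans (mul_le_mul'
          (ENNReal.ofReal_le_ofReal (exp_le hs)) (setLIntegral_le_lintegral _ _))
    _ = _ := lintegral_mul_const _ (by fun_prop)
    _ ≤ _ := mul_le_mul_left (lintegral_const_mul_gaussian_le (Real.exp_pos _).le) _

lemma boxZ_le_Z (h : Admissible v t) (hN : 1 ≤ N) : boxZ v N t ≤ Z v N t :=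
  setIntegral_le_integral (h.integrable_dens hN) (.of_forall fun _ => dens_nonneg _ _ _ _)

lemma Z_pos (h : Admissible v t) (hN : 1 ≤ N) : 0 < Z v N t :=
  (boxZ_pos v N t).trans_le (h.boxZ_le_Z hN)

lemma Z_sub_boxZ_le (h : Admissible v t) (hN : 1 ≤ N) :
    Z v N t - boxZ v N t ≤ N * (6 * Real.exp (-32 * N)) * Z v N t := by
  have integrable := h.integrable_dens hN
  have nonneg : 0 ≤ᵐ[volume] dens v N t := .of_forall fun x => dens_nonneg _ _ _ _
  have compl_subset : (box N)ᶜ ⊆ ⋃ i, {x : Fin N → ℝ | 16 < |x i|} := fun x hx => by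
    simpa [mem_box] using hx
  have Z_sub_boxZ : Z v N t - boxZ v N t = ∫ x in (box N)ᶜ, dens v N t x := by
    rw [Z, boxZ, ← integral_add_compl (measurableSet_box N) integrable, add_sub_cancel_left]
  have hZ := (h.Z_pos hN).le
  rw [Z_sub_boxZ, ← ENNReal.ofReal_le_ofReal_iff (by positivity),
    ENNReal.ofReal_mul (by positivity), ENNReal.ofReal_mul (by positivity), Z,
    ofReal_integral_eq_lintegral_ofReal integrable.integrableOn (ae_restrict_of_ae nonneg),
    ofReal_integral_eq_lintegral_ofReal integrable nonneg]
  calc ∫⁻ x in (box N)ᶜ, ENNReal.ofReal (dens v N t x)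
      ≤ ∫⁻ x in ⋃ i, {x : Fin N → ℝ | 16 < |x i|}, ENNReal.ofReal (dens v N t x) :=
        lintegral_mono_set compl_subset
    _ ≤ ∑ i, ∫⁻ x in {x : Fin N → ℝ | 16 < |x i|}, ENNReal.ofReal (dens v N t x) := by
        simpa only [tsum_fintype] using
          lintegral_iUnion_le (fun i => {x : Fin N → ℝ | 16 < |x i|}) _
    _ ≤ ∑ _i : Fin N,
          ENNReal.ofReal (6 * Real.exp (-32 * N)) * ∫⁻ x, ENNReal.ofReal (dens v N t x) :=
        sum_le_sum fun i _ => h.setLIntegral_dens_tail_le i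
    _ = _ := by simp [mul_assoc]

lemma abs_log_Z_sub_log_boxZ_le (h : Admissible v t) (hN : 1 ≤ N) :
    |Real.log (Z v N t) - Real.log (boxZ v N t)| ≤ 12 * Real.exp (-31 * N) := by
  have hb := boxZ_pos v N t
  have hz := h.Z_pos hN
  set δ := 6 * Real.exp (-31 * (N : ℝ)) with hδ
  have defect_le : Z v N t - boxZ v N t ≤ δ * Z v N t := by
    refine (h.Z_sub_boxZ_le hN).trans (mul_le_mul_of_nonneg_right ?_ hz.le)
    calc N * (6 * Real.exp (-32 * N)) ≤ Real.exp N * (6 * Real.exp (-32 * N)) := by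
          gcongr; linarith [Real.add_one_le_exp (N : ℝ)]
      _ = 6 * Real.exp (N + -32 * N) := by rw [Real.exp_add]; ring
      _ = δ := by rw [show (N : ℝ) + -32 * N = -31 * N by ring]
  have δ_le : δ ≤ 1 / 2 := by
    have hN' : (1 : ℝ) ≤ N := by exact_mod_cast hN
    have : Real.exp (-31 * (N : ℝ)) ≤ 1 / 12 := by
      rw [neg_mul, Real.exp_neg, ← one_div]
      exact one_div_le_one_div_of_le (by norm_num)
        (by linarith [Real.add_one_le_exp (31 * (N : ℝ))])
    linarith
  have log_ratio_le := Real.log_le_sub_one_of_pos (div_pos hz hb)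
  rw [Real.log_div hz.ne' hb.ne', div_sub_one hb.ne'] at log_ratio_le
  rw [abs_of_nonneg (sub_nonneg.mpr (Real.log_le_log hb (h.boxZ_le_Z hN)))]
  refine log_ratio_le.trans ((div_le_iff₀ hb).mpr ?_)
  rw [show 12 * Real.exp (-31 * N) = 2 * δ by rw [hδ]; ring]
  have hδ0 : 0 < δ := by positivity
  nlinarith [mul_nonneg hδ0.le (by nlinarith : 0 ≤ 2 * boxZ v N t - Z v N t)]

end Admissible

/-! ### The loop equations -/

section PowerSums

/-- The `k`-th moment of the empirical measure of `N` eigenvalues. -/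
def empiricalMoment {N : ℕ} (k : ℕ) (x : Fin N → ℝ) : ℝ := (∑ i, x i ^ k) / N

/-- The multi-trace monomial of a word: the product of the empirical moments indexed by its
letters. -/
def momentProd {N : ℕ} (κ : List ℕ) (x : Fin N → ℝ) : ℝ :=
  (κ.map fun k => empiricalMoment k x).prod

variable {N : ℕ}

@[simp] lemma momentProd_nil (x : Fin N → ℝ) : momentProd [] x = 1 := rfl

@[simp] lemma momentProd_cons (k : ℕ) (κ : List ℕ) (x : Fin N → ℝ) :
    momentProd (k :: κ) x = empiricalMoment k x * momentProd κ x := by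
  simp [momentProd]

lemma sum_pow_eq_mul_empiricalMoment (k : ℕ) (x : Fin N → ℝ) :
    ∑ i, x i ^ k = N * empiricalMoment k x := by
  rcases eq_or_ne N 0 with rfl | hN
  · simp
  · rw [empiricalMoment, mul_div_cancel₀ _ (Nat.cast_ne_zero.mpr hN)]

lemma empiricalMoment_zero (hN : N ≠ 0) (x : Fin N → ℝ) : empiricalMoment 0 x = 1 := by
  simp [empiricalMoment, hN]

lemma contDiff_momentProd (κ : List ℕ) :
    ContDiff ℝ 1 (momentProd κ : (Fin N → ℝ) → ℝ) := by
  induction κ with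
  | nil => exact contDiff_const
  | cons k κ ih =>
    simp only [funext (momentProd_cons (N := N) k κ), empiricalMoment]
    fun_prop

lemma abs_empiricalMoment_le {x : Fin N → ℝ} (hx : x ∈ box N) (k : ℕ) :
    |empiricalMoment k x| ≤ 16 ^ k := by
  rw [empiricalMoment, abs_div, Nat.abs_cast]
  refine div_le_of_le_mul₀ (by positivity) (by positivity) ((abs_sum_le_sum_abs _ _).trans ?_)
  calc ∑ i, |x i ^ k| ≤ ∑ _i : Fin N, (16 : ℝ) ^ k := sum_le_sum fun i _ => by
        rw [abs_pow]; exact pow_le_pow_left₀ (abs_nonneg _) (mem_box.mp hx i) _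
    _ = 16 ^ k * N := by simp [mul_comm]

lemma abs_momentProd_le {x : Fin N → ℝ} (hx : x ∈ box N) (κ : List ℕ) :
    |momentProd κ x| ≤ 16 ^ κ.sum := by
  induction κ with
  | nil => simp
  | cons k κ ih =>
    rw [momentProd_cons, abs_mul, List.sum_cons, pow_add]
    exact mul_le_mul (abs_empiricalMoment_le hx k) ih (abs_nonneg _) (by positivity)

lemma sum_sum_geom_sum₂ (k : ℕ) (x : Fin N → ℝ) :
    ∑ p, ∑ q, ∑ a ∈ range k, x p ^ a * x q ^ (k - 1 - a) =
      N ^ 2 * ∑ a ∈ range k, empiricalMoment a x * empiricalMoment (k - 1 - a) x := by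
  have row (p : Fin N) : ∑ q, ∑ a ∈ range k, x p ^ a * x q ^ (k - 1 - a) =
      ∑ a ∈ range k, x p ^ a * ∑ q, x q ^ (k - 1 - a) := by
    simp only [mul_sum]; exact sum_comm
  simp only [row]
  rw [sum_comm, mul_sum]
  refine sum_congr rfl fun a _ => ?_
  rw [← sum_mul, sum_pow_eq_mul_empiricalMoment, sum_pow_eq_mul_empiricalMoment]
  ring

lemma sum_sum_eq_sum_diag_add_sum_filter_lt {M : Type*} [AddCommMonoid M]
    (f : Fin N → Fin N → M) (hf : ∀ p q, f p q = f q p) :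
    ∑ p, ∑ q, f p q =
      ∑ p, f p p + 2 • ∑ p : Fin N × Fin N with p.1 < p.2, f p.1 p.2 := by
  have trichotomy (p q : Fin N) : f p q =
      (if p = q then f p q else 0) + (if p < q then f p q else 0) +
        (if q < p then f q p else 0) := by
    rcases lt_trichotomy p q with h | h | h
    · simp [h, h.ne, h.not_gt]
    · simp [h]
    · simp [h, h.ne', h.not_gt, hf p q]
  rw [sum_filter, Fintype.sum_prod_type, two_nsmul, ← add_assoc]
  calc ∑ p, ∑ q, f p q
      = ∑ p, ∑ q, ((if p = q then f p q else 0) + (if p < q then f p q else 0) +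
          (if q < p then f q p else 0)) := by simp only [← trichotomy]
    _ = _ := by
        simp only [sum_add_distrib, sum_ite_eq, mem_univ, if_true]
        rw [sum_comm (f := fun p q => if q < p then f q p else 0)]

end PowerSums

section LineDerivatives

variable {N : ℕ} (k : ℕ) (x : Fin N → ℝ)

lemma hasLineDerivAt_apply (w : Fin N → ℝ) (i : Fin N) :
    HasLineDerivAt ℝ (fun x : Fin N → ℝ => x i) (w i) x w := by
  simpa [HasLineDerivAt] using ((hasDerivAt_id (0 : ℝ)).mul_const (w i)).const_add (x i)

lemma hasLineDerivAt_empiricalMoment (m : ℕ) :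
    HasLineDerivAt ℝ (empiricalMoment m) (m * empiricalMoment (k + m - 1) x) x (x ^ k) := by
  refine ((HasDerivAt.fun_sum fun i _ =>
    (hasLineDerivAt_apply x (x ^ k) i).fun_pow m).div_const (N : ℝ)).congr_deriv ?_
  rw [empiricalMoment, ← mul_div_assoc, mul_sum]
  congr 1
  refine sum_congr rfl fun i _ => ?_
  rcases m with _ | m
  · simp
  · simp only [zero_smul, add_zero, Nat.add_sub_cancel, Pi.pow_apply]
    rw [show k + (m + 1) - 1 = m + k by omega, pow_add, mul_assoc]

lemma hasLineDerivAt_momentProd (κ : List ℕ) :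
    HasLineDerivAt ℝ (momentProd κ)
      (mergeOp ℝ (fun κ => momentProd κ x) ((k + 1) :: κ)) x (x ^ k) := by
  rw [mergeOp_succ_cons]
  induction κ with
  | nil => simpa [HasLineDerivAt] using hasDerivAt_const (0 : ℝ) (1 : ℝ)
  | cons m κ ih =>
    have h := (hasLineDerivAt_empiricalMoment k x m).mul ih
    simp only [zero_smul, add_zero] at h
    simp only [HasLineDerivAt, momentProd_cons]
    refine h.congr_deriv ?_
    simp only [List.length_cons, Fin.sum_univ_succ, mul_sum]
    simp [momentProd_cons, mul_assoc, mul_left_comm]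

/-- Half of the logarithmic derivative comes from each ordering of a pair of eigenvalues, so that
only the diagonal of the double sum is missing. -/
lemma hasLineDerivAt_prod_filter_lt_sub_sq :
    HasLineDerivAt ℝ (fun x : Fin N → ℝ => ∏ p : Fin N × Fin N with p.1 < p.2, (x p.1 - x p.2) ^ 2)
      ((∏ p : Fin N × Fin N with p.1 < p.2, (x p.1 - x p.2) ^ 2) *
        (N ^ 2 * ∑ a ∈ range k, empiricalMoment a x * empiricalMoment (k - 1 - a) x -
          ∑ i, k * x i ^ (k - 1))) x (x ^ k) := by
  rw [← sum_sum_geom_sum₂, sum_sum_eq_sum_diag_add_sum_filter_lt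
    (fun p q => ∑ a ∈ range k, x p ^ a * x q ^ (k - 1 - a)) fun p q => geom_sum₂_comm _ _ _]
  simp only [geom_sum₂_self, add_sub_cancel_left]
  refine (HasDerivAt.fun_finsetProd fun p _ => ((hasLineDerivAt_apply x (x ^ k) p.1).sub
    (hasLineDerivAt_apply x (x ^ k) p.2)).fun_pow 2).congr_deriv ?_
  rw [nsmul_eq_mul, mul_sum, mul_sum]
  refine sum_congr rfl fun p hp => ?_
  simp only [Pi.sub_apply, Pi.pow_apply, zero_smul, add_zero, smul_eq_mul]
  rw [← mul_prod_erase _ _ hp, ← geom_sum₂_mul (x p.1) (x p.2) k]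
  push_cast
  ring

lemma hasDerivAt_Vt (v : ℕ) (t : ℕ → ℝ) (x : ℝ) : HasDerivAt (Vt v t) (Vt' v t x) x := by
  refine HasDerivAt.add (by simpa using (hasDerivAt_pow 2 x).div_const 2)
    (HasDerivAt.fun_sum fun j _ => ?_)
  exact ((hasDerivAt_pow j x).const_mul (t j)).congr_deriv (by ring)

/-- The couplings `t_1, …, t_v` as a vector, so that `couplings v t j` multiplies the monomial of
degree `j + 1`. -/
def couplings (v : ℕ) (t : ℕ → ℝ) : Fin v → ℝ := fun j => t (j + 1)

lemma sum_Icc_one_eq_sum_fin {M : Type*} [AddCommMonoid M] (v : ℕ) (f : ℕ → M) :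
    ∑ j ∈ Icc 1 v, f j = ∑ j : Fin v, f (j + 1) := by
  rw [Fin.sum_univ_eq_sum_range (fun j => f (j + 1)) v, range_eq_Ico, sum_Ico_add' f 0 v 1]
  rfl

lemma sum_Vt'_mul_pow (v : ℕ) (t : ℕ → ℝ) :
    ∑ i, Vt' v t (x i) * x i ^ k = N * (empiricalMoment (k + 1) x +
      ∑ j, couplings v t j * ((j + 1) * empiricalMoment (k + j) x)) := by
  simp only [Vt', sum_Icc_one_eq_sum_fin, add_mul _ _ (_ ^ k), sum_add_distrib, sum_mul]
  rw [sum_comm, mul_add, ← sum_pow_eq_mul_empiricalMoment, mul_sum]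
  congr 1
  · exact sum_congr rfl fun i _ => by ring
  · refine sum_congr rfl fun j _ => ?_
    rw [mul_left_comm, mul_left_comm (N : ℝ), ← sum_pow_eq_mul_empiricalMoment, mul_sum, mul_sum]
    refine sum_congr rfl fun i _ => ?_
    rw [couplings, Nat.add_sub_cancel, pow_add]
    push_cast
    ring

lemma hasLineDerivAt_dens (v : ℕ) (t : ℕ → ℝ) :
    HasLineDerivAt ℝ (dens v N t)
      (dens v N t x * (N ^ 2 * ∑ a ∈ range k, empiricalMoment a x * empiricalMoment (k - 1 - a) x -
        ∑ i, k * x i ^ (k - 1) - N ^ 2 * (empiricalMoment (k + 1) x +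
          ∑ j, couplings v t j * ((j + 1) * empiricalMoment (k + j) x)))) x (x ^ k) := by
  have hasLineDerivAt_potential : HasLineDerivAt ℝ (fun x : Fin N → ℝ => ∑ i, Vt v t (x i))
      (∑ i, Vt' v t (x i) * x i ^ k) x (x ^ k) :=
    HasDerivAt.fun_sum fun i _ => by
      simpa [Function.comp_def] using
        (hasDerivAt_Vt v t ((x + (0 : ℝ) • x ^ k) i)).comp 0 (hasLineDerivAt_apply x (x ^ k) i)
  refine ((hasLineDerivAt_prod_filter_lt_sub_sq k x).mul
    ((hasLineDerivAt_potential.const_mul (-(N : ℝ))).exp)).congr_deriv ?_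
  rw [sum_Vt'_mul_pow]
  simp only [zero_smul, add_zero, dens]
  ring

lemma sum_fderiv_pow_mul {g : (Fin N → ℝ) → ℝ} (hg : DifferentiableAt ℝ g x) :
    ∑ i, fderiv ℝ (fun x : Fin N → ℝ => x i ^ k * g x) x (Pi.single i 1) =
      fderiv ℝ g x (x ^ k) + (∑ i, k * x i ^ (k - 1)) * g x := by
  have fderiv_summand (i : Fin N) :
      fderiv ℝ (fun x : Fin N → ℝ => x i ^ k * g x) x (Pi.single i 1) =
        x i ^ k * fderiv ℝ g x (Pi.single i 1) + k * x i ^ (k - 1) * g x := by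
    have hasFDerivAt_pow : HasFDerivAt (fun x : Fin N → ℝ => x i ^ k)
        ((k * x i ^ (k - 1)) • ContinuousLinearMap.proj (R := ℝ) (φ := fun _ : Fin N => ℝ) i) x :=
      (hasDerivAt_pow k (x i)).comp_hasFDerivAt x
        (ContinuousLinearMap.proj (R := ℝ) (φ := fun _ : Fin N => ℝ) i).hasFDerivAt
    rw [(hasFDerivAt_pow.fun_mul hg.hasFDerivAt).fderiv]
    simp [mul_comm]
  simp only [fderiv_summand, sum_add_distrib, sum_mul]
  congr 1
  conv_rhs => rw [← univ_sum_single (x ^ k), map_sum]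
  refine sum_congr rfl fun i _ => ?_
  rw [Pi.pow_apply, ← mul_one (x i ^ k), ← smul_eq_mul (x i ^ k) 1, Pi.single_smul, map_smul]
  simp

end LineDerivatives

section Divergence

/-- The operator `K_t + ε B - 1` of the loop equations, where `K_t = transferOp t` and
`B = mergeOp R`; at finite `N` one has `ε = N⁻²`. -/
def loopOp {R : Type*} [CommRing R] {v : ℕ} (t : Fin v → R) (ε : R) :
    (List ℕ → R) →ₗ[R] (List ℕ → R) :=
  transferOp t + ε • mergeOp R - LinearMap.id

lemma loopOp_apply {R : Type*} [CommRing R] {v : ℕ} (t : Fin v → R) (ε : R) (X : List ℕ → R)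
    (κ : List ℕ) : loopOp t ε X κ = transferOp t X κ + ε * mergeOp R X κ - X κ := rfl

lemma loopOp_comp_ringHom {R S : Type*} [CommRing R] [CommRing S] {v : ℕ} (t : Fin v → R) (ε : R)
    (X : List ℕ → R) (φ : R →+* S) : loopOp (φ ∘ t) (φ ε) (φ ∘ X) = φ ∘ loopOp t ε X := by
  ext κ
  simp [loopOp_apply, transferOp_comp_ringHom, mergeOp_comp_ringHom]

lemma proj_comp_loopOp_mem_span {R : Type*} [CommRing R] {v : ℕ} (t : Fin v → R) (ε : R) (k : ℕ)
    (κ : List ℕ) :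
    LinearMap.proj ((k + 1) :: κ) ∘ₗ loopOp t ε ∈
      Submodule.span R (Set.range (LinearMap.proj (R := R) (φ := fun _ : List ℕ => R))) := by
  have eq_sum : LinearMap.proj ((k + 1) :: κ) ∘ₗ loopOp t ε =
      ∑ a ∈ range k, LinearMap.proj (a :: (k - 1 - a) :: κ) +
        ∑ j : Fin v, (t j * -((j : R) + 1)) • LinearMap.proj ((k + j) :: κ) +
        ∑ l : Fin κ.length, (ε * κ[l]) • LinearMap.proj ((k + κ[l] - 1) :: κ.eraseIdx l) -
        LinearMap.proj (R := R) (φ := fun _ : List ℕ => R) ((k + 1) :: κ) := by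
    ext X
    simp only [LinearMap.comp_apply, LinearMap.proj_apply, LinearMap.sub_apply, LinearMap.add_apply,
      LinearMap.sum_apply, LinearMap.smul_apply, smul_eq_mul, loopOp_apply, transferOp_apply,
      splitOp_succ_cons, potentialOp_succ_cons, mergeOp_succ_cons, mul_sum, mul_assoc, mul_neg,
      neg_mul]
  have proj_mem (κ : List ℕ) := Submodule.subset_span (R := R)
    (Set.mem_range_self (f := LinearMap.proj (R := R) (φ := fun _ : List ℕ => R)) κ)
  rw [eq_sum]
  exact sub_mem (add_mem (add_mem (sum_mem fun _ _ => proj_mem _)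
    (sum_mem fun _ _ => Submodule.smul_mem _ _ (proj_mem _)))
    (sum_mem fun _ _ => Submodule.smul_mem _ _ (proj_mem _))) (proj_mem _)

lemma integral_apply_of_mem_span_proj {ι α : Type*} [MeasurableSpace α] {μ : Measure α}
    {f : (ι → ℝ) →ₗ[ℝ] ℝ}
    (hf : f ∈ Submodule.span ℝ (Set.range (LinearMap.proj (R := ℝ) (φ := fun _ : ι => ℝ))))
    {W : α → ι → ℝ} (hW : ∀ i, Integrable (fun x => W x i) μ) :
    Integrable (fun x => f (W x)) μ ∧ ∫ x, f (W x) ∂μ = f fun i => ∫ x, W x i ∂μ := by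
  induction hf using Submodule.span_induction with
  | mem f hf => obtain ⟨i, rfl⟩ := hf; exact ⟨hW i, rfl⟩
  | zero => simp
  | add f g _ _ hf hg =>
    exact ⟨hf.1.add hg.1, by simp [integral_add hf.1 hg.1, hf.2, hg.2]⟩
  | smul c f _ hf => exact ⟨hf.1.const_mul c, by simp [integral_const_mul, hf.2]⟩

lemma contDiff_dens (v N : ℕ) (t : ℕ → ℝ) : ContDiff ℝ 1 (dens v N t) := by
  unfold dens Vt
  fun_prop

lemma sum_fderiv_momentProd_mul_dens {N : ℕ} (hN : N ≠ 0) (v : ℕ) (t : ℕ → ℝ) (k : ℕ) (κ : List ℕ)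
    (x : Fin N → ℝ) :
    ∑ i, fderiv ℝ (fun x => x i ^ k * (momentProd κ x * dens v N t x)) x (Pi.single i 1) =
      N ^ 2 * loopOp (couplings v t) ((N : ℝ) ^ 2)⁻¹ (fun κ => momentProd κ x * dens v N t x)
        ((k + 1) :: κ) := by
  have differentiable : DifferentiableAt ℝ (fun x => momentProd κ x * dens v N t x) x :=
    ((contDiff_momentProd κ).mul (contDiff_dens v N t)).differentiable one_ne_zero x
  have hasLineDerivAt : HasLineDerivAt ℝ (fun x => momentProd κ x * dens v N t x) _ x (x ^ k) :=
    (hasLineDerivAt_momentProd k x κ).mul (hasLineDerivAt_dens k x v t)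
  have smul_moments : (fun κ => momentProd κ x * dens v N t x) =
      dens v N t x • fun κ => momentProd κ x := by ext κ; simp [mul_comm]
  have transferOp_moments : transferOp (couplings v t) (fun κ => momentProd κ x) ((k + 1) :: κ) =
      (∑ a ∈ range k, empiricalMoment a x * empiricalMoment (k - 1 - a) x -
        ∑ j, couplings v t j * ((j + 1) * empiricalMoment (k + j) x)) * momentProd κ x := by
    simp only [transferOp_apply, splitOp_succ_cons, potentialOp_succ_cons, momentProd_cons,
      mul_neg, sum_neg_distrib, ← sub_eq_add_neg]
    simp only [sub_mul, sum_mul, mul_assoc]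
  rw [sum_fderiv_pow_mul k x differentiable, ← differentiable.lineDeriv_eq_fderiv,
    hasLineDerivAt.lineDeriv, smul_moments, map_smul, Pi.smul_apply, loopOp_apply,
    transferOp_moments, momentProd_cons]
  simp only [zero_smul, add_zero, smul_eq_mul]
  field_simp
  ring

end Divergence

section BoxCorrelators

/-- The expectation of `momentProd κ` under the eigenvalue density restricted to `box N`. -/
def boxCorrelator (v N : ℕ) (t : ℕ → ℝ) (κ : List ℕ) : ℝ :=
  (∫ x in box N, momentProd κ x * dens v N t x) / boxZ v N t

lemma boxZ_mul_boxCorrelator (v N : ℕ) (t : ℕ → ℝ) (κ : List ℕ) :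
    boxZ v N t * boxCorrelator v N t κ = ∫ x in box N, momentProd κ x * dens v N t x :=
  mul_div_cancel₀ _ (boxZ_pos v N t).ne'

@[simp] lemma boxCorrelator_nil (v N : ℕ) (t : ℕ → ℝ) : boxCorrelator v N t [] = 1 := by
  simp only [boxCorrelator, momentProd_nil, one_mul]
  exact div_self (boxZ_pos v N t).ne'

lemma boxCorrelator_zero_cons (v : ℕ) {N : ℕ} (hN : N ≠ 0) (t : ℕ → ℝ) (κ : List ℕ) :
    boxCorrelator v N t (0 :: κ) = boxCorrelator v N t κ := by
  simp [boxCorrelator, empiricalMoment_zero hN]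

lemma continuous_momentProd_mul_dens (v N : ℕ) (t : ℕ → ℝ) (κ : List ℕ) :
    Continuous fun x : Fin N → ℝ => momentProd κ x * dens v N t x :=
  (contDiff_momentProd κ).continuous.mul (continuous_dens v N t)

lemma abs_boxCorrelator_le (v N : ℕ) (t : ℕ → ℝ) (κ : List ℕ) :
    |boxCorrelator v N t κ| ≤ 16 ^ κ.sum := by
  rw [boxCorrelator, abs_div, abs_of_pos (boxZ_pos v N t), div_le_iff₀ (boxZ_pos v N t), boxZ,
    ← integral_const_mul]
  refine abs_integral_le_integral_abs.trans (setIntegral_mono_on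
    (integrableOn_box (continuous_momentProd_mul_dens v N t κ)).abs
    ((integrableOn_box (continuous_dens v N t)).const_mul _) (measurableSet_box N) fun x hx => ?_)
  rw [abs_mul, abs_of_nonneg (dens_nonneg v N t x)]
  exact mul_le_mul_of_nonneg_right (abs_momentProd_le hx κ) (dens_nonneg _ _ _ _)

variable {v n : ℕ} {t : ℕ → ℝ}

lemma Admissible.abs_setIntegral_face_le (h : Admissible v t) (k : ℕ) (κ : List ℕ)
    (i : Fin (n + 1)) {c : ℝ} (hc : |c| = 16) :
    |∫ y in box n, (i.insertNth c y : Fin (n + 1) → ℝ) i ^ k *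
      (momentProd κ (i.insertNth c y) * dens v (n + 1) t (i.insertNth c y))| ≤
      16 ^ (k + κ.sum) * (Real.exp (-64 * ((n + 1 : ℕ) : ℝ)) * boxZ v (n + 1) t) := by
  have continuous_insertNth : Continuous fun y : Fin n → ℝ =>
      (i.insertNth c y : Fin (n + 1) → ℝ) := continuous_const.finInsertNth i continuous_id
  have continuous_face_dens := (continuous_dens v (n + 1) t).comp continuous_insertNth
  have continuous_face :=
    (continuous_momentProd_mul_dens v (n + 1) t κ).comp continuous_insertNth
  refine le_trans ?_
    (mul_le_mul_of_nonneg_left (h.setIntegral_box_dens_insertNth_le i hc) (by positivity))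
  rw [← integral_const_mul]
  simp only [Fin.insertNth_apply_same]
  refine abs_integral_le_integral_abs.trans (setIntegral_mono_on
    (integrableOn_box (continuous_face.const_mul (c ^ k))).abs
    (integrableOn_box (continuous_face_dens.const_mul _)) (measurableSet_box n) fun y hy => ?_)
  have abs_momentProd_le := abs_momentProd_le (insertNth_mem_box (i := i).mpr ⟨hc.le, hy⟩) κ
  have dens_nonneg := dens_nonneg v (n + 1) t (i.insertNth c y)
  simp only [abs_mul, abs_pow, hc, abs_of_nonneg dens_nonneg, pow_add,
    mul_assoc]
  gcongr

lemma Admissible.abs_setIntegral_divergence_le (h : Admissible v t) (k : ℕ) (κ : List ℕ) :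
    |∫ x in box (n + 1), ∑ i, fderiv ℝ
        (fun x => x i ^ k * (momentProd κ x * dens v (n + 1) t x)) x (Pi.single i 1)| ≤
      ((n + 1 : ℕ) : ℝ) * (2 * (16 ^ (k + κ.sum) *
        (Real.exp (-64 * ((n + 1 : ℕ) : ℝ)) * boxZ v (n + 1) t))) := by
  have contDiff_field (i : Fin (n + 1)) : ContDiff ℝ 1
      (fun x : Fin (n + 1) → ℝ => x i ^ k * (momentProd κ x * dens v (n + 1) t x)) := by
    have := contDiff_momentProd (N := n + 1) κ
    have := contDiff_dens v (n + 1) t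
    fun_prop
  have continuous_divergence : Continuous fun x : Fin (n + 1) → ℝ => ∑ i, fderiv ℝ
      (fun x => x i ^ k * (momentProd κ x * dens v (n + 1) t x)) x (Pi.single i 1) :=
    continuous_finsetSum _ fun i _ =>
      ((contDiff_field i).continuous_fderiv one_ne_zero).clm_apply continuous_const
  have divergence_theorem := integral_divergence_of_hasFDerivAt_off_countable'
    (fun _ : Fin (n + 1) => (-16 : ℝ)) (fun _ => 16) (fun _ => by norm_num)
    (fun i (x : Fin (n + 1) → ℝ) => x i ^ k * (momentProd κ x * dens v (n + 1) t x))
    (fun i x => fderiv ℝ (fun x => x i ^ k * (momentProd κ x * dens v (n + 1) t x)) x)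
    ∅ Set.countable_empty (fun i => (contDiff_field i).continuous.continuousOn)
    (fun x _ i => ((contDiff_field i).differentiable one_ne_zero x).hasFDerivAt)
    (integrableOn_box continuous_divergence)
  change ∫ x in box (n + 1), _ = ∑ i : Fin (n + 1), ((∫ y in box n, _) - ∫ y in box n, _)
    at divergence_theorem
  rw [divergence_theorem]
  calc _ ≤ ∑ _i : Fin (n + 1), 2 * (16 ^ (k + κ.sum) *
        (Real.exp (-64 * ((n + 1 : ℕ) : ℝ)) * boxZ v (n + 1) t)) := by
        refine (abs_sum_le_sum_abs _ _).trans (sum_le_sum fun i _ => (abs_sub _ _).trans ?_)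
        rw [two_mul]
        exact add_le_add (h.abs_setIntegral_face_le k κ i (by norm_num))
          (h.abs_setIntegral_face_le k κ i (by norm_num))
    _ = _ := by simp

lemma Admissible.abs_loopOp_boxCorrelator_le {N : ℕ} (h : Admissible v t) (hN : 1 ≤ N) (k : ℕ)
    (κ : List ℕ) :
    |loopOp (couplings v t) ((N : ℝ) ^ 2)⁻¹ (boxCorrelator v N t) ((k + 1) :: κ)| ≤
      2 * Real.exp (-64 * N) * 16 ^ (k + κ.sum) := by
  obtain ⟨n, rfl⟩ : ∃ n, N = n + 1 := ⟨N - 1, by omega⟩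
  have integral_divergence := h.abs_setIntegral_divergence_le (n := n) k κ
  have interchange := (integral_apply_of_mem_span_proj
    (proj_comp_loopOp_mem_span (couplings v t) (((n + 1 : ℕ) : ℝ) ^ 2)⁻¹ k κ)
    fun κ => integrableOn_box (continuous_momentProd_mul_dens v (n + 1) t κ)).2
  have smul_boxCorrelator :
      (fun κ => ∫ x in box (n + 1), momentProd κ x * dens v (n + 1) t x) =
        boxZ v (n + 1) t • boxCorrelator v (n + 1) t :=
    funext fun κ => (boxZ_mul_boxCorrelator v (n + 1) t κ).symm
  rw [smul_boxCorrelator, map_smul] at interchange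
  simp only [LinearMap.comp_apply, LinearMap.proj_apply, smul_eq_mul] at interchange
  simp only [sum_fderiv_momentProd_mul_dens n.succ_ne_zero, integral_const_mul]
    at integral_divergence
  rw [interchange, abs_mul, abs_mul, abs_of_pos (boxZ_pos v (n + 1) t),
    abs_of_nonneg (by positivity)] at integral_divergence
  have one_le : (1 : ℝ) ≤ ((n + 1 : ℕ) : ℝ) := Nat.one_le_cast.mpr hN
  set N : ℝ := ((n + 1 : ℕ) : ℝ)
  have hZ := boxZ_pos v (n + 1) t
  refine le_of_mul_le_mul_left ?_ (by positivity : 0 < N * boxZ v (n + 1) t)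
  calc N * boxZ v (n + 1) t * |_| ≤ N ^ 2 * (boxZ v (n + 1) t * |_|) := by
        rw [← mul_assoc]; gcongr; nlinarith
    _ ≤ _ := integral_divergence
    _ = _ := by ring

lemma Admissible.weightBounded_loopOp_boxCorrelator {N : ℕ} (h : Admissible v t) (hN : 1 ≤ N) :
    WeightBounded (wordWeight 64) (2 * Real.exp (-64 * N)) (Pi.single [] 1 +
      loopOp (Complex.ofReal ∘ couplings v t) ((N : ℂ) ^ 2)⁻¹
        (Complex.ofReal ∘ boxCorrelator v N t)) := by
  have real_residual := loopOp_comp_ringHom (couplings v t) ((N : ℝ) ^ 2)⁻¹ (boxCorrelator v N t)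
    Complex.ofRealHom
  simp only [Complex.ofRealHom_eq_coe, Complex.ofReal_inv, Complex.ofReal_pow,
    Complex.ofReal_natCast] at real_residual
  change loopOp (Complex.ofReal ∘ couplings v t) _ (Complex.ofReal ∘ boxCorrelator v N t) = _
    at real_residual
  rw [real_residual]
  intro κ
  have nonneg : 0 ≤ 2 * Real.exp (-64 * N) * wordWeight 64 κ :=
    mul_nonneg (by positivity) (wordWeight_pos (by norm_num) κ).le
  rcases κ with _ | ⟨_ | k, κ⟩
  · simpa [loopOp_apply, transferOp_apply] using nonneg
  · simpa [loopOp_apply, transferOp_apply, boxCorrelator_zero_cons v (by omega : N ≠ 0)]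
      using nonneg
  · have hle := h.abs_loopOp_boxCorrelator_le hN k κ
    simp only [Pi.add_apply, Function.comp_apply, Complex.ofRealHom_eq_coe]
    rw [Pi.single_eq_of_ne (by simp), zero_add, Complex.norm_real, Real.norm_eq_abs]
    refine hle.trans (mul_le_mul_of_nonneg_left ?_ (by positivity))
    calc (16 : ℝ) ^ (k + κ.sum) ≤ 16 ^ ((k + 1) :: κ).sum :=
          pow_le_pow_right₀ (by norm_num) (by rw [List.sum_cons]; omega)
      _ ≤ _ := pow_sum_le_wordWeight (by norm_num) (by norm_num) _

end BoxCorrelators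

/-! ### The expansion of the correlators -/

section CorrelatorExpansion

lemma exp_neg_le_factorial_mul_inv_sq_pow (H : ℕ) {N : ℕ} (hN : 1 ≤ N) :
    Real.exp (-(N : ℝ)) ≤ (2 * H).factorial * ((N : ℝ) ^ 2)⁻¹ ^ H := by
  have hN0 : (0 : ℝ) < N := Nat.cast_pos.mpr hN
  have pow_le := Real.pow_div_factorial_le_exp (N : ℝ) hN0.le (2 * H)
  rw [div_le_iff₀ (by positivity)] at pow_le
  rw [Real.exp_neg, inv_pow, ← pow_mul, ← div_eq_mul_inv, inv_eq_one_div,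
    div_le_div_iff₀ (Real.exp_pos _) (by positivity), one_mul, mul_comm (Nat.cast _)]
  exact pow_le

lemma radius_strictMono : StrictMono radius := strictMono_nat_of_lt_succ radius_lt_radius_succ

variable {v : ℕ} {t : Fin v → ℂ} {S : ℕ → List ℕ → ℂ}

lemma IsGenusExpansion.sum_range_succ_eq (hS : IsGenusExpansion t S) (ε : ℂ) (H : ℕ) :
    ∑ g ∈ range (H + 1), ε ^ g • S g =
      Pi.single [] 1 + ε • mergeOp ℂ (∑ g ∈ range H, ε ^ g • S g) +
        transferOp t (∑ g ∈ range (H + 1), ε ^ g • S g) := by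
  have summand (g : ℕ) : ε ^ (g + 1) • S (g + 1) =
      ε • ε ^ g • mergeOp ℂ (S g) + ε ^ (g + 1) • transferOp t (S (g + 1)) := by
    nth_rw 1 [hS.succ g]
    rw [smul_add, smul_smul, pow_succ']
  simp only [map_add, map_sum, map_smul, sum_range_succ', smul_sum, pow_zero, one_smul]
  rw [sum_congr rfl fun g _ => summand g, sum_add_distrib]
  nth_rw 1 [hS.zero]
  abel

lemma IsGenusExpansion.sub_sum_range_succ_eq (hS : IsGenusExpansion t S) (ε : ℂ)
    (X : List ℕ → ℂ) (H : ℕ) :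
    X - ∑ g ∈ range (H + 1), ε ^ g • S g =
      (ε • mergeOp ℂ (X - ∑ g ∈ range H, ε ^ g • S g) - (Pi.single [] 1 + loopOp t ε X)) +
        transferOp t (X - ∑ g ∈ range (H + 1), ε ^ g • S g) := by
  have residual : X = Pi.single [] 1 + ε • mergeOp ℂ X + transferOp t X -
      (Pi.single [] 1 + loopOp t ε X) := by
    simp only [loopOp, LinearMap.sub_apply, LinearMap.add_apply, LinearMap.smul_apply,
      LinearMap.id_apply]
    abel
  nth_rw 1 [residual, hS.sum_range_succ_eq]
  rw [map_sub, map_sub, smul_sub]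
  abel

/-- An approximate solution of the loop equations with a residual of order `ε ^ H` agrees with the
genus expansion to that order. -/
lemma exists_weightBounded_sub_sum_range {A : ℝ} (hA : 0 ≤ A) (H : ℕ) :
    ∃ C, ∀ {v : ℕ} {t : Fin v → ℂ} {S : ℕ → List ℕ → ℂ} {ε : ℂ} {X : List ℕ → ℂ},
      t ∈ couplingBall v → IsGenusExpansion t S → ‖ε‖ ≤ 1 → WeightBounded (wordWeight 64) 1 X →
      WeightBounded (wordWeight 64) (A * ‖ε‖ ^ H) (Pi.single [] 1 + loopOp t ε X) →
      WeightBounded (wordWeight (radius H)) (C * ‖ε‖ ^ H)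
        (X - ∑ g ∈ range H, ε ^ g • S g) := by
  induction H with
  | zero => exact ⟨1, fun _ _ _ hX _ => by simpa [radius_zero] using hX⟩
  | succ H ih =>
    obtain ⟨C, hC⟩ := ih
    obtain ⟨B, hB⟩ := exists_weightBounded_mergeOp
      (by linarith [sixty_four_le_radius H] : 2 ≤ radius H) (radius_lt_radius_succ H)
    refine ⟨4 * (B * C + A), fun {v t S ε X} ht hS hε hX hres => ?_⟩
    have mono_weight {g : ℕ} (hg : g ≤ H + 1) (κ : List ℕ) :
        wordWeight (radius g) κ ≤ wordWeight (radius (H + 1)) κ :=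
      wordWeight_mono (radius_pos g) (radius_strictMono.monotone hg) κ
    have pos (κ : List ℕ) : 0 < wordWeight 64 κ := wordWeight_pos (by norm_num) κ
    have mono_sixty_four (κ : List ℕ) : wordWeight 64 κ ≤ wordWeight (radius (H + 1)) κ :=
      wordWeight_mono (by norm_num) (sixty_four_le_radius _) κ
    choose M hM using hS.bounded
    have finite_bound := (hX.mono pos mono_sixty_four le_rfl).sub (WeightBounded.sum
      (range (H + 1)) fun g hg => ((hM g).mono (fun κ => wordWeight_pos (radius_pos g) κ)
        (mono_weight (mem_range.mp hg).le) le_rfl).smul (ε ^ g))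
    have remainder := hC ht hS hε hX (hres.mono_const pos
      (mul_le_mul_of_nonneg_left (pow_le_pow_of_le_one (norm_nonneg _) hε H.le_succ) hA))
    have source := ((hB _ _ remainder).smul ε).sub (hres.mono pos mono_sixty_four le_rfl)
    convert weightBounded_of_eq_add_transferOp ht finite_bound source
      (hS.sub_sum_range_succ_eq ε X H) using 1
    ring

lemma weightBounded_ofReal_boxCorrelator (v N : ℕ) (t : ℕ → ℝ) :
    WeightBounded (wordWeight 64) 1 (Complex.ofReal ∘ boxCorrelator v N t) := fun κ => by
  rw [one_mul, Function.comp_apply, Complex.norm_real, Real.norm_eq_abs]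
  exact (abs_boxCorrelator_le v N t κ).trans
    (pow_sum_le_wordWeight (by norm_num) (by norm_num) κ)

lemma exists_norm_boxCorrelator_sub_sum_range_le (v H : ℕ) (κ : List ℕ) :
    ∃ C, ∀ t : ℕ → ℝ, Admissible v t → Complex.ofReal ∘ couplings v t ∈ couplingBall v →
      ∀ N : ℕ, 1 ≤ N →
        ‖(boxCorrelator v N t κ : ℂ) - ∑ g ∈ range H, ((N : ℂ) ^ 2)⁻¹ ^ g *
          genusCorrelator (Complex.ofReal ∘ couplings v t) g κ‖ ≤ C * ((N : ℝ) ^ 2)⁻¹ ^ H := by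
  obtain ⟨C, hC⟩ := exists_weightBounded_sub_sum_range
    (by positivity : (0 : ℝ) ≤ 2 * (2 * H).factorial) H
  refine ⟨C * wordWeight (radius H) κ, fun t h ht N hN => ?_⟩
  have hN' : (1 : ℝ) ≤ N := Nat.one_le_cast.mpr hN
  have norm_eps : ‖((N : ℂ) ^ 2)⁻¹‖ = ((N : ℝ) ^ 2)⁻¹ := by simp
  have residual_le : 2 * Real.exp (-64 * N) ≤ 2 * (2 * H).factorial * ((N : ℝ) ^ 2)⁻¹ ^ H := by
    rw [mul_assoc]
    refine mul_le_mul_of_nonneg_left (le_trans (Real.exp_le_exp.mpr ?_)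
      (exp_neg_le_factorial_mul_inv_sq_pow H hN)) zero_le_two
    linarith
  have bounded := hC ht (isGenusExpansion_genusCorrelator ht)
    (norm_eps.trans_le (inv_le_one_of_one_le₀ (one_le_pow₀ hN')))
    (weightBounded_ofReal_boxCorrelator v N t)
    ((h.weightBounded_loopOp_boxCorrelator hN).mono_const
      (fun κ => wordWeight_pos (by norm_num) κ) (by rwa [norm_eps])) κ
  rw [norm_eps, mul_right_comm] at bounded
  simpa [Finset.sum_apply] using bounded

end CorrelatorExpansion

/-! ### The free energy -/

section RayIntegral

variable {E F : Type*} [NormedAddCommGroup E] [NormedSpace ℂ E] [NormedAddCommGroup F]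
  [NormedSpace ℂ F] {f : E → F} {p : FormalMultilinearSeries ℂ E F} {r : ENNReal}

lemma integral_ofReal_pow (n : ℕ) : ∫ τ in (0 : ℝ)..1, (τ : ℂ) ^ n = ((n : ℂ) + 1)⁻¹ := by
  simp_rw [← Complex.ofReal_pow]
  rw [intervalIntegral.integral_ofReal, integral_pow]
  simp

lemma ofReal_smul_mem_eball {τ : ℝ} (hτ : τ ∈ Set.Icc (0 : ℝ) 1) {y : E}
    (hy : y ∈ Metric.eball (0 : E) r) : (τ : ℂ) • y ∈ Metric.eball (0 : E) r := by
  rw [Metric.mem_eball, edist_zero_right] at hy ⊢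
  refine lt_of_le_of_lt ?_ hy
  rw [enorm_le_iff_norm_le, norm_smul, Complex.norm_real, Real.norm_of_nonneg hτ.1]
  exact mul_le_of_le_one_left (norm_nonneg _) hτ.2

lemma hasSum_integral_smul [CompleteSpace F] (hp : HasFPowerSeriesOnBall f p 0 r) {y : E}
    (hy : y ∈ Metric.eball (0 : E) r) :
    HasSum (fun n : ℕ => ((n : ℂ) + 1)⁻¹ • p n fun _ => y)
      (∫ τ in (0 : ℝ)..1, f ((τ : ℂ) • y)) := by
  have homogeneous (n : ℕ) (τ : ℝ) : p n (fun _ => (τ : ℂ) • y) = (τ : ℂ) ^ n • p n fun _ => y := by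
    simpa using (p n).map_smul_univ (fun _ => (τ : ℂ)) fun _ => y
  have integral_term (n : ℕ) : ∫ τ in (0 : ℝ)..1, p n (fun _ => (τ : ℂ) • y) =
      ((n : ℂ) + 1)⁻¹ • p n fun _ => y := by
    simp only [homogeneous, intervalIntegral.integral_smul_const, integral_ofReal_pow]
  simp only [← integral_term]
  refine intervalIntegral.hasSum_integral_of_dominated_convergence
    (fun n _ => ‖p n fun _ => y‖) (fun n => ?_) (fun n => .of_forall fun τ hτ => ?_)
    (.of_forall fun _ _ => p.summable_norm_apply (Metric.eball_subset_eball hp.r_le hy))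
    intervalIntegrable_const (.of_forall fun τ hτ => ?_)
  · simp only [homogeneous]
    exact Continuous.aestronglyMeasurable (by fun_prop)
  all_goals rw [Set.uIoc_of_le zero_le_one] at hτ
  · rw [homogeneous, norm_smul, norm_pow, Complex.norm_real, Real.norm_of_nonneg hτ.1.le]
    exact mul_le_of_le_one_left (norm_nonneg _) (pow_le_one₀ hτ.1.le hτ.2)
  · simpa using hp.hasSum (ofReal_smul_mem_eball ⟨hτ.1.le, hτ.2⟩ hy)

lemma analyticAt_integral_smul [CompleteSpace F] (hf : AnalyticAt ℂ f 0) :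
    AnalyticAt ℂ (fun y => ∫ τ in (0 : ℝ)..1, f ((τ : ℂ) • y)) 0 := by
  obtain ⟨p, r, hp⟩ := hf
  refine ⟨fun n => ((n : ℂ) + 1)⁻¹ • p n, r,
    hp.r_le.trans (FormalMultilinearSeries.radius_le_of_le fun n => ?_), hp.r_pos,
    fun hy => by simpa using hasSum_integral_smul hp hy⟩
  rw [norm_smul, norm_inv, ← Nat.cast_add_one, Complex.norm_natCast]
  exact mul_le_of_le_one_left (norm_nonneg _)
    (inv_le_one_of_one_le₀ (Nat.one_le_cast.mpr n.succ_pos))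

end RayIntegral

lemma norm_sub_sub_integral_le_of_norm_deriv_sub_le {E : Type*} [NormedAddCommGroup E]
    [NormedSpace ℝ E] [CompleteSpace E] {f f' g : ℝ → E} {C : ℝ}
    (hf : ∀ τ ∈ Set.Icc (0 : ℝ) 1, HasDerivAt f (f' τ) τ) (hg : ContinuousOn g (Set.Icc 0 1))
    (hC : ∀ τ ∈ Set.Icc (0 : ℝ) 1, ‖f' τ - g τ‖ ≤ C) :
    ‖f 1 - f 0 - ∫ τ in (0 : ℝ)..1, g τ‖ ≤ C := by
  have hasDerivWithinAt_integral (τ : ℝ) (hτ : τ ∈ Set.Icc (0 : ℝ) 1) :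
      HasDerivWithinAt (fun u => ∫ σ in (0 : ℝ)..u, g σ) (g τ) (Set.Icc 0 1) τ := by
    have : Fact (τ ∈ Set.Icc (0 : ℝ) 1) := ⟨hτ⟩
    have hsub : Set.uIcc 0 τ ⊆ Set.Icc 0 1 := by
      rw [Set.uIcc_of_le hτ.1]
      exact Set.Icc_subset_Icc_right hτ.2
    exact intervalIntegral.integral_hasDerivWithinAt_right (hg.mono hsub).intervalIntegrable
      (hg.stronglyMeasurableAtFilter_nhdsWithin measurableSet_Icc τ) (hg τ hτ)
  have mean_value := norm_image_sub_le_of_norm_deriv_le_segment_01'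
    (fun τ hτ => (hf τ hτ).hasDerivWithinAt.sub (hasDerivWithinAt_integral τ hτ))
    fun τ hτ => hC τ ⟨hτ.1, hτ.2.le⟩
  convert mean_value using 2
  simp only [Pi.sub_apply, intervalIntegral.integral_same]
  abel

lemma hasDerivAt_setIntegral_of_isCompact {α E : Type*} [TopologicalSpace α] [T2Space α]
    [MeasurableSpace α] [BorelSpace α] [SecondCountableTopology α] [NormedAddCommGroup E]
    [NormedSpace ℝ E] {μ : Measure α} [IsFiniteMeasureOnCompacts μ] {K : Set α} (hK : IsCompact K)
    {f f' : ℝ → α → E} (hf : ∀ τ, Continuous (f τ)) (hf' : Continuous ↿f')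
    (hderiv : ∀ τ x, HasDerivAt (fun τ => f τ x) (f' τ x) τ) (τ : ℝ) :
    HasDerivAt (fun τ => ∫ x in K, f τ x ∂μ) (∫ x in K, f' τ x ∂μ) τ := by
  obtain ⟨C, hC⟩ := ((isCompact_closedBall τ 1).prod hK).exists_bound_of_continuousOn
    hf'.continuousOn
  refine (hasDerivAt_integral_of_dominated_loc_of_deriv_le (bound := fun _ => C)
    (Metric.closedBall_mem_nhds τ one_pos)
    (.of_forall fun τ => (hf τ).aestronglyMeasurable)
    ((hf τ).continuousOn.integrableOn_compact hK)
    (hf'.comp (Continuous.prodMk_right τ)).aestronglyMeasurable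
    ((ae_restrict_mem hK.measurableSet).mono fun x hx τ' hτ' => hC (τ', x) ⟨hτ', hx⟩)
    ((integrableOn_const_iff (C := C)).mpr (.inr hK.measure_lt_top))
    (.of_forall fun x τ _ => hderiv τ x)).2

section RayDerivative

variable (v N : ℕ) (t : ℕ → ℝ)

lemma hasDerivAt_dens_smul (x : Fin N → ℝ) (τ : ℝ) :
    HasDerivAt (fun τ : ℝ => dens v N (τ • t) x)
      (-(N : ℝ) ^ 2 * ∑ j, couplings v t j * (momentProd [(j : ℕ) + 1] x * dens v N (τ • t) x))
      τ := by
  have hasDerivAt_Vt (y : ℝ) :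
      HasDerivAt (fun τ : ℝ => Vt v (τ • t) y) (∑ j, couplings v t j * y ^ ((j : ℕ) + 1)) τ := by
    have : (fun τ : ℝ => Vt v (τ • t) y) =
        fun τ => y ^ 2 / 2 + τ * ∑ j, couplings v t j * y ^ ((j : ℕ) + 1) := by
      ext τ
      simp [Vt, sum_Icc_one_eq_sum_fin, couplings, mul_sum, mul_assoc]
    rw [this]
    exact (hasDerivAt_mul_const _).const_add _
  have exponent : ∑ i, ∑ j, couplings v t j * x i ^ ((j : ℕ) + 1) =
      N * ∑ j, couplings v t j * empiricalMoment (j + 1) x := by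
    rw [sum_comm, mul_sum]
    refine sum_congr rfl fun j _ => ?_
    rw [← mul_sum, sum_pow_eq_mul_empiricalMoment, mul_left_comm]
  refine (((HasDerivAt.fun_sum fun i (_ : i ∈ univ) =>
    hasDerivAt_Vt (x i)).const_mul (-(N : ℝ))).exp.const_mul _).congr_deriv ?_
  rw [exponent]
  simp only [momentProd_cons, momentProd_nil, mul_one, ← mul_assoc, ← sum_mul]
  rw [dens]
  ring

lemma hasDerivAt_boxZ_smul (τ : ℝ) :
    HasDerivAt (fun τ : ℝ => boxZ v N (τ • t))
      (-(N : ℝ) ^ 2 * ∑ j, couplings v t j *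
        ∫ x in box N, momentProd [(j : ℕ) + 1] x * dens v N (τ • t) x) τ := by
  have continuous_deriv : Continuous ↿fun (τ : ℝ) (x : Fin N → ℝ) => -(N : ℝ) ^ 2 *
      ∑ j, couplings v t j * (momentProd [(j : ℕ) + 1] x * dens v N (τ • t) x) := by
    have := fun j : Fin v => (contDiff_momentProd (N := N) [(j : ℕ) + 1]).continuous
    have : Continuous fun p : ℝ × (Fin N → ℝ) => dens v N (p.1 • t) p.2 := by
      simp only [dens, Vt, Pi.smul_apply, smul_eq_mul]
      fun_prop
    simp only [Function.HasUncurry.uncurry, id]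
    fun_prop
  refine (hasDerivAt_setIntegral_of_isCompact (isCompact_box N)
    (fun τ => continuous_dens v N (τ • t)) continuous_deriv
    (fun τ x => hasDerivAt_dens_smul v N t x τ) τ).congr_deriv ?_
  rw [integral_const_mul, integral_finsetSum _ fun j _ =>
    (integrableOn_box (continuous_momentProd_mul_dens v N _ _)).const_mul _]
  simp only [integral_const_mul]

lemma hasDerivAt_log_boxZ_smul (τ : ℝ) :
    HasDerivAt (fun τ : ℝ => Real.log (boxZ v N (τ • t)))
      (-(N : ℝ) ^ 2 * ∑ j, couplings v t j * boxCorrelator v N (τ • t) [(j : ℕ) + 1]) τ := by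
  have hZ := boxZ_pos v N (τ • t)
  refine ((hasDerivAt_boxZ_smul v N t τ).log hZ.ne').congr_deriv ?_
  simp only [← boxZ_mul_boxCorrelator, mul_left_comm _ (boxZ v N (τ • t)), ← mul_sum]
  exact mul_div_cancel_left₀ _ hZ.ne'

end RayDerivative

section FreeEnergy

variable {v : ℕ}

/-- The coefficient `e_g` of `N ^ (2 - 2 * g)` in the expansion of the free energy
`log (Z_N(t) / Z_N(0))`, as a function of complex couplings. -/
def freeEnergyCoeff (g : ℕ) (t : Fin v → ℂ) : ℂ :=
  -∑ j, t j * ∫ τ in (0 : ℝ)..1, genusCorrelator ((τ : ℂ) • t) g [(j : ℕ) + 1]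

lemma analyticAt_freeEnergyCoeff (g : ℕ) :
    AnalyticAt ℂ (freeEnergyCoeff g : (Fin v → ℂ) → ℂ) 0 :=
  (Finset.analyticAt_fun_sum _ fun j _ =>
    ((ContinuousLinearMap.proj (R := ℂ) (φ := fun _ : Fin v => ℂ) j).analyticAt 0).mul
      (analyticAt_integral_smul
        (analyticAt_genusCorrelator zero_mem_couplingBall g [(j : ℕ) + 1]))).neg

lemma ofReal_smul_mem_couplingBall {t : Fin v → ℂ} (ht : t ∈ couplingBall v) {τ : ℝ}
    (hτ : τ ∈ Set.Icc (0 : ℝ) 1) : (τ : ℂ) • t ∈ couplingBall v :=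
  smul_mem_couplingBall ht (by rw [Complex.norm_real, Real.norm_of_nonneg hτ.1]; exact hτ.2)

lemma continuousOn_genusCorrelator_ofReal_smul {t : Fin v → ℂ} (ht : t ∈ couplingBall v) (g : ℕ)
    (κ : List ℕ) :
    ContinuousOn (fun τ : ℝ => genusCorrelator ((τ : ℂ) • t) g κ) (Set.Icc 0 1) := fun τ hτ =>
  ((analyticAt_genusCorrelator (ofReal_smul_mem_couplingBall ht hτ) g κ).continuousAt.comp
    (f := fun τ : ℝ => (τ : ℂ) • t) (by fun_prop)).continuousWithinAt

lemma ofReal_re_freeEnergyCoeff_ofReal {s : Fin v → ℝ}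
    (hs : Complex.ofReal ∘ s ∈ couplingBall v) (g : ℕ) :
    ((freeEnergyCoeff g (Complex.ofReal ∘ s)).re : ℂ) = freeEnergyCoeff g (Complex.ofReal ∘ s) := by
  refine Complex.conj_eq_iff_re.mp ?_
  rw [freeEnergyCoeff, map_neg, map_sum]
  congr 1
  refine sum_congr rfl fun j _ => ?_
  rw [map_mul, Function.comp_apply, Complex.conj_ofReal,
    intervalIntegral.integral_of_le zero_le_one, ← integral_conj]
  congr 1
  refine setIntegral_congr_fun measurableSet_Ioc fun τ hτ => ?_
  have ray : (τ : ℂ) • (Complex.ofReal ∘ s) = Complex.ofReal ∘ (τ • s) := by ext; simp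
  have hmem := ofReal_smul_mem_couplingBall hs (Set.Ioc_subset_Icc_self hτ)
  simp only [ray] at hmem ⊢
  exact conj_genusCorrelator_ofReal hmem g _

lemma ofReal_comp_couplings_smul (v : ℕ) (t : ℕ → ℝ) (τ : ℝ) :
    Complex.ofReal ∘ couplings v (τ • t) = (τ : ℂ) • (Complex.ofReal ∘ couplings v t) := by
  ext; simp [couplings]

lemma integral_sum_mul_genusCorrelator {t : Fin v → ℂ} (ht : t ∈ couplingBall v) (a ε : ℂ)
    (H : ℕ) :
    ∫ τ in (0 : ℝ)..1, -a * ∑ j, t j * ∑ g ∈ range H, ε ^ g *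
        genusCorrelator ((τ : ℂ) • t) g [(j : ℕ) + 1] =
      a * ∑ g ∈ range H, ε ^ g * freeEnergyCoeff g t := by
  have integrable (g : ℕ) (j : Fin v) : IntervalIntegrable
      (fun τ : ℝ => genusCorrelator ((τ : ℂ) • t) g [(j : ℕ) + 1]) volume 0 1 :=
    (continuousOn_genusCorrelator_ofReal_smul ht g _).intervalIntegrable_of_Icc zero_le_one
  have interchange (τ : ℝ) : -a * ∑ j, t j * ∑ g ∈ range H, ε ^ g *
      genusCorrelator ((τ : ℂ) • t) g [(j : ℕ) + 1] =
      ∑ g ∈ range H, a * ε ^ g * ∑ j, -t j * genusCorrelator ((τ : ℂ) • t) g [(j : ℕ) + 1] := by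
    simp only [mul_sum]
    rw [sum_comm]
    exact sum_congr rfl fun g _ => sum_congr rfl fun j _ => by ring
  have integrable_sum (g : ℕ) : IntervalIntegrable (fun τ : ℝ =>
      ∑ j, -t j * genusCorrelator ((τ : ℂ) • t) g [(j : ℕ) + 1]) volume 0 1 := by
    simpa [Finset.sum_fn] using
      IntervalIntegrable.sum univ fun j _ => (integrable g j).const_mul (-t j)
  simp only [interchange]
  rw [intervalIntegral.integral_finsetSum fun g _ => (integrable_sum g).const_mul _, mul_sum]
  refine sum_congr rfl fun g _ => ?_
  rw [intervalIntegral.integral_const_mul,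
    intervalIntegral.integral_finsetSum fun j _ => (integrable g j).const_mul _, mul_assoc]
  simp_rw [intervalIntegral.integral_const_mul, neg_mul, sum_neg_distrib]
  rw [freeEnergyCoeff]

lemma exists_norm_log_boxZ_sub_sum_range_le (v H : ℕ) :
    ∃ C, ∀ t : ℕ → ℝ, Admissible v t → Complex.ofReal ∘ couplings v t ∈ couplingBall v →
      ∀ N : ℕ, 1 ≤ N →
        ‖(Real.log (boxZ v N t) : ℂ) - Real.log (boxZ v N 0) - (N : ℂ) ^ 2 * ∑ g ∈ range H,
          ((N : ℂ) ^ 2)⁻¹ ^ g * freeEnergyCoeff g (Complex.ofReal ∘ couplings v t)‖ ≤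
          C * ((N : ℝ) ^ 2 * ((N : ℝ) ^ 2)⁻¹ ^ H) := by
  choose C hC using fun j : Fin v =>
    exists_norm_boxCorrelator_sub_sum_range_le v H [(j : ℕ) + 1]
  refine ⟨couplingRadius v * ∑ j, |C j|, fun t h ht N hN => ?_⟩
  set s := Complex.ofReal ∘ couplings v t with hs
  set ε : ℂ := ((N : ℂ) ^ 2)⁻¹
  have norm_le (j : Fin v) : ‖s j‖ ≤ couplingRadius v :=
    (single_le_sum (fun j _ => norm_nonneg (s j)) (mem_univ j)).trans (le_of_lt ht)
  rw [← integral_sum_mul_genusCorrelator ht]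
  have mean_value := norm_sub_sub_integral_le_of_norm_deriv_sub_le
    (fun τ _ => (hasDerivAt_log_boxZ_smul v N t τ).ofReal_comp)
    (g := fun τ => -(N : ℂ) ^ 2 * ∑ j, s j * ∑ g ∈ range H, ε ^ g *
      genusCorrelator ((τ : ℂ) • s) g [(j : ℕ) + 1])
    (C := couplingRadius v * (∑ j, |C j|) * ((N : ℝ) ^ 2 * ((N : ℝ) ^ 2)⁻¹ ^ H)) ?_ ?_
  · simpa using mean_value
  · have := fun g κ => continuousOn_genusCorrelator_ofReal_smul ht g κ
    fun_prop
  intro τ hτ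
  have remainder (j : Fin v) : ‖s j * ((boxCorrelator v N (τ • t) [(j : ℕ) + 1] : ℂ) -
      ∑ g ∈ range H, ε ^ g * genusCorrelator ((τ : ℂ) • s) g [(j : ℕ) + 1])‖ ≤
      couplingRadius v * (|C j| * ((N : ℝ) ^ 2)⁻¹ ^ H) := by
    have hle := hC j (τ • t) (h.smul hτ) (by
      rw [ofReal_comp_couplings_smul]; exact ofReal_smul_mem_couplingBall ht hτ) N hN
    rw [ofReal_comp_couplings_smul, ← hs] at hle
    rw [norm_mul]
    refine mul_le_mul (norm_le j) (hle.trans ?_) (norm_nonneg _) (couplingRadius_pos v).le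
    exact mul_le_mul_of_nonneg_right (le_abs_self _) (by positivity)
  calc _ = ‖(-(N : ℂ) ^ 2) * ∑ j, s j * ((boxCorrelator v N (τ • t) [(j : ℕ) + 1] : ℂ) -
        ∑ g ∈ range H, ε ^ g * genusCorrelator ((τ : ℂ) • s) g [(j : ℕ) + 1])‖ := by
        simp only [mul_sub, sum_sub_distrib, hs]
        push_cast
        rfl
    _ ≤ (N : ℝ) ^ 2 * ∑ j, couplingRadius v * (|C j| * ((N : ℝ) ^ 2)⁻¹ ^ H) := by
        rw [norm_mul, norm_neg, norm_pow, Complex.norm_natCast]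
        gcongr
        exact (norm_sum_le _ _).trans (sum_le_sum fun j _ => remainder j)
    _ = _ := by rw [← mul_sum, ← sum_mul]; ring

lemma exists_abs_log_Z_div_sub_sum_range_le (v H : ℕ) :
    ∃ C, ∀ t : ℕ → ℝ, Admissible v t → Complex.ofReal ∘ couplings v t ∈ couplingBall v →
      ∀ N : ℕ, 1 ≤ N →
        |Real.log (Z v N t / Z v N 0) - (N : ℝ) ^ 2 * ∑ g ∈ range (H + 1), ((N : ℝ) ^ 2)⁻¹ ^ g *
          (freeEnergyCoeff g (Complex.ofReal ∘ couplings v t)).re| ≤ C * ((N : ℝ) ^ 2)⁻¹ ^ H := by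
  obtain ⟨C, hC⟩ := exists_norm_log_boxZ_sub_sum_range_le v (H + 1)
  refine ⟨C + 24 * (2 * H).factorial, fun t h ht N hN => ?_⟩
  have truncated := (Complex.abs_re_le_norm _).trans (hC t h ht N hN)
  have hN0 : (N : ℝ) ^ 2 ≠ 0 := by positivity
  rw [pow_succ' _ H, mul_inv_cancel_left₀ hN0] at truncated
  simp only [← Complex.ofReal_natCast, ← Complex.ofReal_pow, ← Complex.ofReal_inv,
    Complex.sub_re, Complex.re_ofReal_mul, Complex.re_sum, Complex.ofReal_re] at truncated
  have exp_le : Real.exp (-31 * N) ≤ (2 * H).factorial * ((N : ℝ) ^ 2)⁻¹ ^ H :=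
    (Real.exp_le_exp.mpr (by linarith [Nat.cast_nonneg (α := ℝ) N])).trans
      (exp_neg_le_factorial_mul_inv_sq_pow H hN)
  have log_Z := h.abs_log_Z_sub_log_boxZ_le hN
  have log_Z_zero := (Admissible.zero v).abs_log_Z_sub_log_boxZ_le hN
  rw [Real.log_div (h.Z_pos hN).ne' ((Admissible.zero v).Z_pos hN).ne', add_mul]
  rw [abs_le] at truncated log_Z log_Z_zero ⊢
  constructor <;> linarith

end FreeEnergy

section Domain

variable {v : ℕ} {t : ℕ → ℝ} {T γ : ℝ}

lemma couplings_pad (s : Fin v → ℝ) : couplings v (pad v s) = s := by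
  ext j; simp [couplings, pad]

lemma sum_abs_le_of_mem_Tdom (h : t ∈ Tdom v T γ) : ∑ j ∈ Icc 1 v, |t j| ≤ v * T := by
  have abs_le (j : ℕ) (hj : j ∈ Icc 1 v) : |t j| ≤ T := by
    rw [← Real.sqrt_sq_eq_abs]
    exact (Real.sqrt_le_sqrt
      (single_le_sum (f := fun j => t j ^ 2) (fun _ _ => sq_nonneg _) hj)).trans h.1
  simpa using sum_le_sum abs_le

lemma ofReal_comp_couplings_mem_couplingBall (h : t ∈ Tdom v T γ)
    (hT : v * T < couplingRadius v) : Complex.ofReal ∘ couplings v t ∈ couplingBall v := by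
  have hle := sum_abs_le_of_mem_Tdom h
  rw [sum_Icc_one_eq_sum_fin] at hle
  simpa [couplingBall, couplings] using hle.trans_lt hT

lemma admissible_of_mem_Tdom (hv : Even v) (hγ : 1 ≤ γ) (h : t ∈ Tdom v T γ)
    (hT : v * T ≤ 1 / 2) : Admissible v t where
  sum_abs_le := (sum_abs_le_of_mem_Tdom h).trans hT
  nonneg x hx := by
    rcases v with _ | w
    · simp
    have leading : ∑ j ∈ Icc 1 w, |t j| ≤ t (w + 1) :=
      (le_mul_of_one_le_left (sum_nonneg fun _ _ => abs_nonneg _) hγ).trans h.2.le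
    have lower : |∑ j ∈ Icc 1 w, t j * x ^ j| ≤ t (w + 1) * x ^ (w + 1) := by
      calc |∑ j ∈ Icc 1 w, t j * x ^ j| ≤ ∑ j ∈ Icc 1 w, |t j| * |x| ^ (w + 1) := by
            refine (abs_sum_le_sum_abs _ _).trans (sum_le_sum fun j hj => ?_)
            rw [abs_mul, abs_pow]
            have := (mem_Icc.mp hj).2
            gcongr
            exact this.trans w.le_succ
        _ ≤ t (w + 1) * |x| ^ (w + 1) := by rw [← sum_mul]; gcongr
        _ = t (w + 1) * x ^ (w + 1) := by rw [hv.pow_abs]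
    rw [sum_Icc_succ_top (by omega)]
    linarith [(abs_le.mp lower).1]

end Domain

lemma couplingRadius_le_half (v : ℕ) : couplingRadius v ≤ 1 / 2 := by
  have : (1 : ℝ) ≤ 128 ^ v := one_le_pow₀ (by norm_num)
  rw [couplingRadius]
  gcongr
  nlinarith [Nat.cast_nonneg (α := ℝ) v]

lemma sq_mul_sum_range_inv_sq_pow {x : ℝ} (hx : x ≠ 0) (a : ℕ → ℝ) (h : ℕ) :
    x ^ 2 * ∑ g ∈ range (h + 1), (x ^ 2)⁻¹ ^ g * a g =
      x ^ 2 * a 0 + ∑ j ∈ range h, (x ^ (2 * j))⁻¹ * a (j + 1) := by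
  rw [sum_range_succ', mul_add, add_comm, mul_sum, pow_zero, one_mul]
  refine congrArg _ (sum_congr rfl fun j _ => ?_)
  rw [pow_succ' _ j, ← mul_assoc, ← mul_assoc, mul_inv_cancel₀ (pow_ne_zero 2 hx), one_mul, inv_pow,
    ← pow_mul]

/-- There exist `T > 0`, `γ > 0` and functions `e_0, e_1, e_2, …`, each
analytic in the complex vector `t` in a neighborhood of `t = 0`, such that
`log(Z_N(t)/Z_N(0))` admits the complete asymptotic expansion
`N² e_0(t) + e_1(t) + N⁻² e_2(t) + ⋯` in even powers of `1/N`, uniformly for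
`t ∈ 𝕋(T,γ)`. -/
theorem logZ_full_expansion (v : ℕ) (hv : 2 ≤ v) (hve : Even v) :
    ∃ T > (0 : ℝ), ∃ γ > (0 : ℝ), ∃ e : ℕ → (Fin v → ℝ) → ℝ,
      (∀ j : ℕ, ∃ (E : (Fin v → ℂ) → ℂ) (U : Set (Fin v → ℂ)),
        U ∈ nhds (0 : Fin v → ℂ) ∧ AnalyticOn ℂ E U ∧
        ∀ s : Fin v → ℝ, (fun i => (s i : ℂ)) ∈ U → E (fun i => (s i : ℂ)) = e j s) ∧
      ∀ h : ℕ, ∃ C : ℝ, ∀ s : Fin v → ℝ, pad v s ∈ Tdom v T γ → ∀ N : ℕ, 1 ≤ N →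
        |Real.log (Z v N (pad v s) / Z v N 0) -
            ((N : ℝ) ^ 2 * e 0 s +
              ∑ j ∈ Finset.range (h + 1), ((N : ℝ) ^ (2 * j))⁻¹ * e (j + 1) s)| ≤
          C / (N : ℝ) ^ (2 * h + 2) := by
  have hd := couplingRadius_pos v
  have : (0 : ℝ) < v := by positivity
  have hT : v * (couplingRadius v / (2 * v)) = couplingRadius v / 2 := by field_simp
  refine ⟨couplingRadius v / (2 * v), by positivity, 1, one_pos,
    fun g s => (freeEnergyCoeff g (Complex.ofReal ∘ s)).re, fun g => ?_, fun h => ?_⟩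
  · exact ⟨freeEnergyCoeff g, {t | AnalyticAt ℂ (freeEnergyCoeff g) t} ∩ couplingBall v,
      inter_mem (analyticAt_freeEnergyCoeff g).eventually_analyticAt
        (couplingBall_mem_nhds zero_mem_couplingBall),
      fun t ht => ht.1.analyticWithinAt,
      fun s hs => (ofReal_re_freeEnergyCoeff_ofReal hs.2 g).symm⟩
  · obtain ⟨C, hC⟩ := exists_abs_log_Z_div_sub_sum_range_le v (h + 1)
    refine ⟨C, fun s hs N hN => ?_⟩
    have expansion := hC (pad v s)
      (admissible_of_mem_Tdom hve le_rfl hs (by linarith [couplingRadius_le_half v]))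
      (ofReal_comp_couplings_mem_couplingBall hs (by linarith)) N hN
    rw [couplings_pad, sq_mul_sum_range_inv_sq_pow (by positivity)] at expansion
    rwa [inv_pow, ← pow_mul, mul_add, mul_one, ← div_eq_mul_inv] at expansion

end LoopEq
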